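/- arXiv:1611.08271 — 2 statements merged into one kernel-verified Lean document; each statement's English description precedes it below -/
import Mathlib

section
/- If G is a (7,3)-graph that is p4-connected and has at least 7 vertices, then G is not L-integral. -/
/-!
A `p₄`-connected `(7,3)`-graph with at least seven vertices is a headless spider: its vertices are
partitioned into legs, each consisting of a body vertex and a foot, such that the bodies form a
clique, the feet form an independent set, and body and foot of different legs are all nonadjacent
while those of the same leg are adjacent (thin spider), or the other way round (thick spider).

To see this, note that a set of vertices that is `p₄`-connected can be enlarged by any `P₄` that
crosses its boundary (`PC.grow`). A finite search shows that no seven vertices of a `(7,3)`-graph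
are `p₄`-connected (`not_pc_seven`). Hence two `P₄`s never meet in one vertex, and starting from a
single `P₄` one reaches a `p₄`-connected set of six vertices (`exists_pc_six`). A `P₄` crossing its
boundary must have exactly two vertices outside, and a second finite search (`check8_eq`) shows that
the eight vertices then form a spider with four legs (`exists_spider`). The same search, applied to
subspiders with three legs, shows that a spider can be enlarged by a leg until it exhausts the
graph (`exists_spanning_spider`). Both searches build graphs on `7` or `8` vertices one vertex at a
time on top of a path with four vertices, and discard a graph as soon as it has four `P₄`s among
seven vertices; they are evaluated by the kernel.

A spider with `k` legs is not `L`-integral. Take a vector that is constant up to the factor `τ`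
between the body and the foot of each leg and whose foot entries sum to zero. It is an eigenvector
of the Laplacian with eigenvalue `1 - τ` if the spider is thin and `τ ^ 2 + k * τ = 1`, and with
eigenvalue `k - 1 + τ` if it is thick and `τ ^ 2 - k * τ = 1` (`lap_legVec`). An integral `τ` would
be a unit of `ℤ` equal to its inverse `τ ± k`, which forces `k = 0`.
-/

open SimpleGraph Polynomial

/-- A finite simple graph is `L`-integral if every eigenvalue of its Laplacian
matrix (over `ℝ`) is an integer. -/
def LIntegral {V : Type*} [Fintype V] [DecidableEq V] (G : SimpleGraph V)
    [DecidableRel G.Adj] : Prop :=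
  ∀ μ ∈ spectrum ℝ (G.lapMatrix ℝ), ∃ z : ℤ, μ = (z : ℝ)

/-- The finite vertex set `W` induces a path `P₄` in `G`. -/
def InducesP4 {V : Type*} (G : SimpleGraph V) (W : Finset V) : Prop :=
  Nonempty (G.induce (W : Set V) ≃g SimpleGraph.pathGraph 4)

/-- A graph is `P₄`-sparse if every set of five vertices contains at most one
4-element subset inducing a path `P₄`. -/
def P4Sparse {V : Type*} (G : SimpleGraph V) : Prop :=
  ∀ s : Finset V, s.card = 5 →
    {W : Finset V | W ⊆ s ∧ W.card = 4 ∧ InducesP4 G W}.Subsingleton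

/-- A `(7,3)`-graph: every set of `7` vertices contains at most three `4`-element
subsets inducing a path `P₄`. -/
def SevenThreeGraph {V : Type*} (G : SimpleGraph V) : Prop :=
  ∀ s : Finset V, s.card = 7 →
    {W : Finset V | W ⊆ s ∧ W.card = 4 ∧ InducesP4 G W}.encard ≤ 3

/-- A graph is `p₄`-connected if for every partition of the vertex set into two
nonempty parts, some induced `P₄` meets both parts. -/
def P4Connected {V : Type*} (G : SimpleGraph V) : Prop :=
  ∀ A : Set V, A.Nonempty → Aᶜ.Nonempty →
    ∃ W : Finset V, W.card = 4 ∧ InducesP4 G W ∧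
      ((W : Set V) ∩ A).Nonempty ∧ ((W : Set V) ∩ Aᶜ).Nonempty

namespace SevenThree

/-! ### The finite search -/

/-- The `t`-th binary digit of `m`, in a form that reduces quickly in the kernel. -/
def bit (m t : ℕ) : Bool := Nat.beq (Nat.land (Nat.shiftRight m t) 1) 1

/-- Four vertices `a < b < c < d` of a graph on an initial segment of `ℕ`: the set `{a, b, c, d}`
as a bitmask, and the positions of the six pairs in the bit code of a graph. A graph is coded by
the number whose digit at position `j * (j - 1) / 2 + i` says whether `i < j` are adjacent, so
that adding a vertex to the graph adds higher digits to the code. -/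
structure Quad where
  mask : ℕ
  ab : ℕ
  ac : ℕ
  bc : ℕ
  ad : ℕ
  bd : ℕ
  cd : ℕ

/-- The position of the pair `i < j` in the code of a graph. -/
def pos (i j : ℕ) : ℕ := j * (j - 1) / 2 + i

/-- The quadruple `a < b < c < d`. -/
def quad (a b c d : ℕ) : Quad :=
  ⟨2 ^ a + 2 ^ b + 2 ^ c + 2 ^ d, pos a b, pos a c, pos b c, pos a d, pos b d, pos c d⟩

/-- Whether four vertices with the given adjacencies induce a `P₄`. -/
def p4b (ab ac bc ad bd cd : Bool) : Bool :=
  bif ab then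
    bif cd then
      bif ac then !bc && (!ad && !bd) else bif bc then !ad && !bd else bif ad then !bd else bd
    else
      bif ac then !bc && (!ad && bd) else bc && (ad && !bd)
  else
    bif cd then
      bif ac then !bc && (!ad && bd) else bc && (ad && !bd)
    else
      bif ac then bif bc then (bif ad then !bd else bd) else ad && bd else bc && (ad && bd)

/-- Whether `q` induces a `P₄` in the graph with code `e`. -/
def quadP4 (e : ℕ) (q : Quad) : Bool :=
  p4b (bit e q.ab) (bit e q.ac) (bit e q.bc) (bit e q.ad) (bit e q.bd) (bit e q.cd)

def moreThan3 : List ℕ → Bool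
  | _ :: _ :: _ :: _ :: _ => true
  | _ => false

/-- Adds to `acc` the masks of the members of `qs` that induce a `P₄`, and passes the result
to `k`; succeeds at once if more than three `P₄`s have been found. The continuation `k` makes the
kernel evaluate the list once only. -/
def collect (e : ℕ) (qs : List Quad) : List ℕ → (List ℕ → Bool) → Bool :=
  List.rec (fun acc k => k acc)
    (fun q _ ih acc k =>
      bif quadP4 e q then moreThan3 (q.mask :: acc) || ih (q.mask :: acc) k else ih acc k) qs

/-- Whether some member of `qs` induces a `P₄` in the graph with code `e`. -/
def anyP4 (e : ℕ) (qs : List Quad) : Bool :=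
  List.rec false (fun q _ ih => quadP4 e q || ih) qs

/-- `List.filter` in continuation-passing style. -/
def select (f : ℕ → Bool) (l : List ℕ) : List ℕ → (List ℕ → Bool) → Bool :=
  List.rec (fun acc k => k acc) (fun x _ ih acc k => bif f x then ih (x :: acc) k else ih acc k) l

/-- `List.all`, through the recursor, for evaluation in the kernel. -/
def allOf (l : List ℕ) (f : ℕ → Bool) : Bool := List.rec true (fun x _ ih => f x && ih) l

/-- Enlarges the vertex set with mask `c` by each of the sets in `l` that meets it, one after the
other. -/
def sweep (l : List ℕ) (c : ℕ) : ℕ :=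
  l.foldl (fun c m => bif Nat.beq (Nat.land m c) 0 then c else Nat.lor m c) c

/-- Whether `c` is a nonempty proper part of the set with mask `full` that no member of `A`
crosses. -/
def splitBy (full : ℕ) (A : List ℕ) (c : ℕ) : Bool :=
  (Nat.blt 0 c && Nat.blt c full) &&
    A.all fun m => Nat.beq (Nat.land m c) 0 || Nat.beq (Nat.land m c) m

/-- Whether the component of `{0, 1, 2, 3}` in the hypergraph `A` is not everything. Three sweeps
suffice for the at most three members of `A`. -/
def split (full : ℕ) (A : List ℕ) : Bool := splitBy full A (sweep A (sweep A (sweep A 15)))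

/-- All rows of length `n`, for `n = 4, 5, 6`: the possible adjacencies of a new vertex. -/
def rows : ℕ → List ℕ
  | 4 => [0, 1, 2, 3, 4, 5, 6, 7, 8, 9, 10, 11, 12, 13, 14, 15]
  | 5 => [0, 1, 2, 3, 4, 5, 6, 7, 8, 9, 10, 11, 12, 13, 14, 15, 16, 17, 18, 19, 20, 21, 22, 23, 24,
      25, 26, 27, 28, 29, 30, 31]
  | _ => [0, 1, 2, 3, 4, 5, 6, 7, 8, 9, 10, 11, 12, 13, 14, 15, 16, 17, 18, 19, 20, 21, 22, 23, 24,
      25, 26, 27, 28, 29, 30, 31, 32, 33, 34, 35, 36, 37, 38, 39, 40, 41, 42, 43, 44, 45, 46,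
      47, 48, 49, 50, 51, 52, 53, 54, 55, 56, 57, 58, 59, 60, 61, 62, 63]

/-- The quadruples with last vertex `4`. -/
def quads4 : List Quad :=
  [quad 0 1 2 4, quad 0 1 3 4, quad 0 2 3 4, quad 1 2 3 4]

/-- The quadruples with last vertex `5`. -/
def quads5 : List Quad :=
  [quad 0 1 2 5, quad 0 1 3 5, quad 0 1 4 5, quad 0 2 3 5, quad 0 2 4 5, quad 0 3 4 5, quad 1 2
    3 5, quad 1 2 4 5, quad 1 3 4 5, quad 2 3 4 5]

/-- The quadruples with last vertex `6`. -/
def quads6 : List Quad :=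
  [quad 0 1 2 6, quad 0 1 3 6, quad 0 1 4 6, quad 0 1 5 6, quad 0 2 3 6, quad 0 2 4 6, quad 0 2
    5 6, quad 0 3 4 6, quad 0 3 5 6, quad 0 4 5 6, quad 1 2 3 6, quad 1 2 4 6, quad 1 2 5 6,
    quad 1 3 4 6, quad 1 3 5 6, quad 1 4 5 6, quad 2 3 4 6, quad 2 3 5 6, quad 2 4 5 6, quad 3 4
    5 6]

/-- The quadruples containing `6` and `7`. -/
def quads7 : List Quad :=
  [quad 0 1 6 7, quad 0 2 6 7, quad 0 3 6 7, quad 0 4 6 7, quad 0 5 6 7, quad 1 2 6 7, quad 1 3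
    6 7, quad 1 4 6 7, quad 1 5 6 7, quad 2 3 6 7, quad 2 4 6 7, quad 2 5 6 7, quad 3 4 6 7,
    quad 3 5 6 7, quad 4 5 6 7]

/-- Adds the row `x` to a code with `m` digits. -/
def ext (e m x : ℕ) : ℕ := Nat.lor e (Nat.shiftLeft x m)

/-- The code of the graph on `4` vertices with the path `0, 1, 2, 3`. -/
def code4 : ℕ := 37

/-- The code of the graph on five vertices that adds to `code4` a vertex with row `x4`; likewise
`code6`, `code7` and `code8` add one more vertex each. -/
def code5 (x4 : ℕ) : ℕ := ext code4 6 x4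

def code6 (x4 x5 : ℕ) : ℕ := ext (code5 x4) 10 x5

def code7 (x4 x5 x6 : ℕ) : ℕ := ext (code6 x4 x5) 15 x6

def code8 (x4 x5 x6 x7 : ℕ) : ℕ := ext (code7 x4 x5 x6) 21 x7

/-- No graph on seven vertices with at most three `P₄`s, one of them `0, 1, 2, 3`, is
`p₄`-connected. -/
def check7 : Bool :=
  allOf (rows 4) fun x4 => collect (code5 x4) quads4 [15] fun A4 =>
  allOf (rows 5) fun x5 => collect (code6 x4 x5) quads5 A4 fun A5 =>
  allOf (rows 6) fun x6 => collect (code7 x4 x5 x6) quads6 A5 fun A6 => split 127 A6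

/-- The last four rows of the spiders on eight vertices in which `0, 1, 2, 3` is a path, `4` and
`5` form a leg and `6` and `7` form a leg. -/
def spiderCodes : List (List ℕ) :=
  [[0, 22, 38, 64], [0, 22, 0, 102], [6, 16, 22, 64], [6, 16, 0, 86],
    [6, 15, 63, 38], [6, 15, 38, 63], [15, 6, 63, 22], [15, 6, 22, 63]]

/-- If the first six vertices are `p₄`-connected and neither `6` nor `7` alone lies in a `P₄` with
three of them, then no `P₄` contains both `6` and `7`, or seven of the eight vertices span more than
three `P₄`s, or the graph is a spider. -/
def check8 : Bool :=
  allOf (rows 4) fun x4 => collect (code5 x4) quads4 [15] fun A4 =>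
  allOf (rows 5) fun x5 => collect (code6 x4 x5) quads5 A4 fun A5 =>
  split 63 A5 ||
  select (fun x6 => !(anyP4 (code7 x4 x5 x6) quads6)) (rows 6) [] fun R =>
  allOf R fun x6 => allOf R fun x => allOf [x, 64 + x] fun x7 =>
    !(anyP4 (code8 x4 x5 x6 x7) quads7) ||
      (([0, 1, 2, 3, 4, 5].any fun i =>
          collect (code8 x4 x5 x6 x7) (quads7.filter fun q => !(bit q.mask i))
            (A5.filter fun m => !(bit m i)) fun _ => false) ||
        spiderCodes.contains [x4, x5, x6, x7])

theorem check7_eq : check7 = true := by decide +kernel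

theorem check8_eq : check8 = true := by decide +kernel

/-! ### Induced paths -/

section Paths

variable {V : Type*} [DecidableEq V] {G : SimpleGraph V}

theorem inducesP4_of_path {a b c d : V} (hab : G.Adj a b) (hbc : G.Adj b c) (hcd : G.Adj c d)
    (hac : ¬ G.Adj a c) (had : ¬ G.Adj a d) (hbd : ¬ G.Adj b d) :
    InducesP4 G {a, b, c, d} := by
  have h1 : a ≠ c := by rintro rfl; exact had hcd
  have h2 : a ≠ d := by rintro rfl; exact hac hcd.symm
  have h3 : b ≠ d := by rintro rfl; exact had hab
  have h4 := hab.ne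
  have h5 := hbc.ne
  have h6 := hcd.ne
  let f : Fin 4 → ((({a, b, c, d} : Finset V) : Set V) : Type _) :=
    ![⟨a, by simp⟩, ⟨b, by simp⟩, ⟨c, by simp⟩, ⟨d, by simp⟩]
  have hf : Function.Bijective f := by
    constructor
    · intro i j hij
      have := congrArg Subtype.val hij
      fin_cases i <;> fin_cases j <;> simp_all [f]
    · rintro ⟨x, hx⟩
      have hx' : x = a ∨ x = b ∨ x = c ∨ x = d := by simpa using hx
      rcases hx' with rfl | rfl | rfl | rfl
      exacts [⟨0, rfl⟩, ⟨1, rfl⟩, ⟨2, rfl⟩, ⟨3, rfl⟩]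
  refine ⟨RelIso.symm ⟨Equiv.ofBijective f hf, ?_⟩⟩
  intro i j
  have e1 := hab.symm
  have e2 := hbc.symm
  have e3 := hcd.symm
  have e4 : ¬ G.Adj c a := fun h => hac h.symm
  have e5 : ¬ G.Adj d a := fun h => had h.symm
  have e6 : ¬ G.Adj d b := fun h => hbd h.symm
  fin_cases i <;> fin_cases j <;> simp [f, pathGraph_adj, *]

/-- Adjacency in the path on `Fin 4`. -/
def pathB (i j : Fin 4) : Bool := decide (i.val + 1 = j.val ∨ j.val + 1 = i.val)

theorem p4b_of_path {i j k l : Fin 4} (hij : i ≠ j) (hik : i ≠ k) (hil : i ≠ l) (hjk : j ≠ k)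
    (hjl : j ≠ l) (hkl : k ≠ l) :
    p4b (pathB i j) (pathB i k) (pathB j k) (pathB i l) (pathB j l) (pathB k l) = true := by
  have h : ∀ i j k l : Fin 4, (i == j || i == k || i == l || j == k || j == l || k == l ||
      p4b (pathB i j) (pathB i k) (pathB j k) (pathB i l) (pathB j l) (pathB k l)) = true := by
    decide +kernel
  simpa [hij, hik, hil, hjk, hjl, hkl] using h i j k l

theorem path_of_p4b : ∀ ab ac bc ad bd cd : Bool, p4b ab ac bc ad bd cd = true →
    (ab && bc && cd && !ac && !ad && !bd) || (ab && bd && cd && !ad && !ac && !bc) ||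
    (ac && bc && bd && !ab && !ad && !cd) || (ac && cd && bd && !ad && !ab && !bc) ||
    (ad && bd && bc && !ab && !ac && !cd) || (ad && cd && bc && !ac && !ab && !bd) ||
    (ab && ac && cd && !bc && !bd && !ad) || (ab && ad && cd && !bd && !bc && !ac) ||
    (bc && ac && ad && !ab && !bd && !cd) || (bd && ad && ac && !ab && !bc && !cd) ||
    (bc && ab && ad && !ac && !cd && !bd) || (bd && ab && ac && !ad && !cd && !bc) = true := by
  decide

theorem inducesP4_iff {a b c d : V} (hab : a ≠ b) (hac : a ≠ c) (had : a ≠ d) (hbc : b ≠ c)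
    (hbd : b ≠ d) (hcd : c ≠ d) [DecidableRel G.Adj] :
    p4b (decide (G.Adj a b)) (decide (G.Adj a c)) (decide (G.Adj b c)) (decide (G.Adj a d))
      (decide (G.Adj b d)) (decide (G.Adj c d)) = true ↔ InducesP4 G {a, b, c, d} := by
  constructor
  · intro h
    have h2 := path_of_p4b _ _ _ _ _ _ h
    simp only [Bool.or_eq_true, Bool.and_eq_true, Bool.not_eq_true', decide_eq_true_eq,
      decide_eq_false_iff_not] at h2
    have key : ∀ {x y z w : V}, ({x, y, z, w} : Finset V) = {a, b, c, d} →
        G.Adj x y → G.Adj y z → G.Adj z w → ¬ G.Adj x z → ¬ G.Adj x w → ¬ G.Adj y w →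
        InducesP4 G {a, b, c, d} := fun e h1 h2 h3 h4 h5 h6 =>
      e ▸ inducesP4_of_path h1 h2 h3 h4 h5 h6
    have hs : ∀ {x y : V}, ¬ G.Adj x y → ¬ G.Adj y x := fun h h' => h h'.symm
    rcases h2 with (((((((((((h|h)|h)|h)|h)|h)|h)|h)|h)|h)|h)|h) <;>
      obtain ⟨⟨⟨⟨⟨k1, k2⟩, k3⟩, k4⟩, k5⟩, k6⟩ := h
    · exact key (x := a) (y := b) (z := c) (w := d) rfl k1 k2 k3 k4 k5 k6
    · exact key (x := a) (y := b) (z := d) (w := c) (by ext; simp; tauto)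
        k1 k2 k3.symm k4 k5 k6
    · exact key (x := a) (y := c) (z := b) (w := d) (by ext; simp; tauto)
        k1 k2.symm k3 k4 k5 k6
    · exact key (x := a) (y := c) (z := d) (w := b) (by ext; simp; tauto)
        k1 k2 k3.symm k4 k5 (hs k6)
    · exact key (x := a) (y := d) (z := b) (w := c) (by ext; simp; tauto)
        k1 k2.symm k3 k4 k5 (hs k6)
    · exact key (x := a) (y := d) (z := c) (w := b) (by ext; simp; tauto)
        k1 k2.symm k3.symm k4 k5 (hs k6)
    · exact key (x := b) (y := a) (z := c) (w := d) (by ext; simp; tauto)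
        k1.symm k2 k3 k4 k5 k6
    · exact key (x := b) (y := a) (z := d) (w := c) (by ext; simp; tauto)
        k1.symm k2 k3.symm k4 k5 k6
    · exact key (x := b) (y := c) (z := a) (w := d) (by ext; simp; tauto)
        k1 k2.symm k3 (hs k4) k5 k6
    · exact key (x := b) (y := d) (z := a) (w := c) (by ext; simp; tauto)
        k1 k2.symm k3 (hs k4) k5 (hs k6)
    · exact key (x := c) (y := b) (z := a) (w := d) (by ext; simp; tauto)
        k1.symm k2.symm k3 (hs k4) k5 k6
    · exact key (x := d) (y := b) (z := a) (w := c) (by ext; simp; tauto)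
        k1.symm k2.symm k3 (hs k4) (hs k5) k6
  · rintro ⟨e⟩
    have hm : ∀ x, x ∈ ({a, b, c, d} : Finset V) → x ∈ (({a, b, c, d} : Finset V) : Set V) :=
      fun x hx => hx
    have hadj : ∀ x y hx hy,
        decide (G.Adj x y) = pathB (e ⟨x, hm x hx⟩) (e ⟨y, hm y hy⟩) := by
      intro x y hx hy
      have h : G.Adj x y ↔ (pathGraph 4).Adj (e ⟨x, hm x hx⟩) (e ⟨y, hm y hy⟩) := by
        rw [e.map_rel_iff]
        simp
      rw [pathB, decide_eq_decide, h, pathGraph_adj]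
    have hne : ∀ x y hx hy, x ≠ y → e ⟨x, hm x hx⟩ ≠ e ⟨y, hm y hy⟩ := by
      intro x y hx hy hxy h
      exact hxy (congrArg Subtype.val (e.injective h))
    have ha : a ∈ ({a, b, c, d} : Finset V) := by simp
    have hb : b ∈ ({a, b, c, d} : Finset V) := by simp
    have hc : c ∈ ({a, b, c, d} : Finset V) := by simp
    have hd : d ∈ ({a, b, c, d} : Finset V) := by simp
    rw [hadj a b ha hb, hadj a c ha hc, hadj b c hb hc, hadj a d ha hd, hadj b d hb hd,
      hadj c d hc hd]
    exact p4b_of_path (hne _ _ ha hb hab) (hne _ _ ha hc hac) (hne _ _ ha hd had)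
      (hne _ _ hb hc hbc) (hne _ _ hb hd hbd) (hne _ _ hc hd hcd)

/-- A four-vertex set inducing a `P₄` is traversed by a path. -/
theorem path_of_inducesP4 {W : Finset V} (h : InducesP4 G W) :
    ∃ a b c d, W = {a, b, c, d} ∧ G.Adj a b ∧ G.Adj b c ∧ G.Adj c d ∧
      ¬ G.Adj a c ∧ ¬ G.Adj a d ∧ ¬ G.Adj b d := by
  obtain ⟨e⟩ := h
  have hadj : ∀ i j, G.Adj (e.symm i) (e.symm j) ↔ (i.val + 1 = j.val ∨ j.val + 1 = i.val) := by
    intro i j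
    rw [← pathGraph_adj, ← e.symm.map_rel_iff]
    simp
  refine ⟨e.symm 0, e.symm 1, e.symm 2, e.symm 3, ?_, ?_⟩
  · ext x
    constructor
    · intro hx
      have : x = e.symm (e ⟨x, hx⟩) := by simp
      rw [this]
      generalize e ⟨x, hx⟩ = i
      fin_cases i <;> simp
    · intro hx
      simp only [Finset.mem_insert, Finset.mem_singleton] at hx
      rcases hx with rfl | rfl | rfl | rfl <;> exact (e.symm _).2
  · simp only [hadj]
    decide

end Paths

/-! ### Labelled vertices and their codes -/

open Finset

theorem bit_eq (m t : ℕ) : bit m t = m.testBit t := by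
  rw [Nat.testBit_eq_decide_div_mod_eq, bit, Bool.eq_iff_iff, Nat.beq_eq, decide_eq_true_eq]
  change (m >>> t) &&& 1 = 1 ↔ _
  rw [Nat.and_one_is_mod, Nat.shiftRight_eq_div_pow]

/-- The positions of the digits `1` of `m < 256`. -/
def onBits (m : ℕ) : Finset ℕ := (range 8).filter fun t => bit m t = true

theorem onBits_inj {m m' : ℕ} (hm : m < 2 ^ 8) (hm' : m' < 2 ^ 8) (h : onBits m = onBits m') :
    m = m' := by
  refine Nat.eq_of_testBit_eq fun i => ?_
  by_cases hi : i < 8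
  · have := congrArg (i ∈ ·) h
    simp only [onBits, mem_filter, mem_range, hi, true_and, eq_iff_iff, bit_eq] at this
    exact Bool.eq_iff_iff.2 this
  · have h8 : 2 ^ 8 ≤ 2 ^ i := Nat.pow_le_pow_right (by norm_num) (by omega)
    rw [Nat.testBit_lt_two_pow (hm.trans_le h8), Nat.testBit_lt_two_pow (hm'.trans_le h8)]

theorem onBits_subset_range {m n : ℕ} (hm : m < 2 ^ n) : onBits m ⊆ range n := by
  intro i hi
  simp only [onBits, mem_filter, mem_range, bit_eq] at hi ⊢
  by_contra hin
  have h8 : 2 ^ n ≤ 2 ^ i := Nat.pow_le_pow_right (by norm_num) (by omega)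
  rw [Nat.testBit_lt_two_pow (hm.trans_le h8)] at hi
  simp at hi

theorem onBits_full {n : ℕ} (hn : n ≤ 8) : onBits (2 ^ n - 1) = range n := by
  interval_cases n <;> decide +kernel

theorem onBits_quad : ∀ l < 8, ∀ k < l, ∀ j < k, ∀ i < j,
    onBits (2 ^ i + 2 ^ j + 2 ^ k + 2 ^ l) = {i, j, k, l} := by decide +kernel

theorem exists_mask {T : Finset ℕ} {n : ℕ} (hn : n ≤ 8) (hT : T ⊆ range n) :
    ∃ m < 2 ^ n, onBits m = T := by
  refine ⟨∑ i ∈ T, 2 ^ i, Nat.geomSum_lt le_rfl fun k hk => mem_range.1 (hT hk), ?_⟩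
  have h : ∀ T ∈ (range 8).powerset, onBits (∑ i ∈ T, 2 ^ i) = T := by decide +kernel
  exact h T (mem_powerset.2 (hT.trans (range_subset_range.2 hn)))

theorem mask_disjoint {m c : ℕ} (h : Nat.land m c = 0) : onBits m ∩ onBits c = ∅ := by
  ext i
  have : (m &&& c).testBit i = false := by
    rw [show m &&& c = 0 from h]; simp
  simp only [Nat.testBit_and] at this
  simp only [onBits, mem_inter, mem_filter, bit_eq]
  simp
  intro _ h1 _ 
  simpa [h1] using this

theorem mask_subset {m c : ℕ} (h : Nat.land m c = m) : onBits m ⊆ onBits c := by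
  intro i
  have : (m &&& c).testBit i = m.testBit i := by
    rw [show m &&& c = m from h]
  simp only [Nat.testBit_and] at this
  simp only [onBits, mem_filter, bit_eq]
  rintro ⟨h1, h2⟩
  exact ⟨h1, by simpa [h2] using this⟩

theorem bit_ext {e m x t : ℕ} : bit (ext e m x) t = (bit e t || (decide (m ≤ t) && bit x (t - m))) := by
  simp only [bit_eq]
  change (e ||| x <<< m).testBit t = _
  simp [Nat.testBit_or, Nat.testBit_shiftLeft]

theorem ext_lt {e m n x : ℕ} (he : e < 2 ^ m) (hx : x < 2 ^ n) : ext e m x < 2 ^ (m + n) := by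
  change e ||| x <<< m < _
  refine Nat.or_lt_two_pow (he.trans_le (Nat.pow_le_pow_right (by norm_num) (by omega))) ?_
  rw [Nat.shiftLeft_eq, pow_add, mul_comm]
  exact Nat.mul_lt_mul_of_pos_left hx (by positivity)

theorem pos_zero_succ (n : ℕ) : pos 0 (n + 1) = pos 0 n + n := by
  simp only [pos]
  rw [← Nat.choose_two_right, ← Nat.choose_two_right, Nat.choose_succ_succ']
  simp [add_comm]

theorem pos_lt {i j n : ℕ} (hij : i < j) (hj : j < n) : pos i j < pos 0 n := by
  have h : ∀ k, pos 0 (j + 1) ≤ pos 0 (j + 1 + k) := by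
    intro k
    induction k with
    | zero => exact le_rfl
    | succ k ih =>
      refine ih.trans ?_
      rw [← add_assoc, pos_zero_succ (j + 1 + k)]
      omega
  obtain ⟨k, rfl⟩ := Nat.exists_eq_add_of_le (show j + 1 ≤ n from hj)
  have := h k
  rw [pos_zero_succ j] at this
  have h2 : pos i j = pos 0 j + i := by simp [pos]
  omega

section Labels

set_option linter.unusedSectionVars false

variable {V : Type*} [DecidableEq V] {G : SimpleGraph V}

/-- The set of vertices whose labels are the digits of `m`. -/
def vs (v : ℕ → V) (m : ℕ) : Finset V := (onBits m).image v

/-- The digits of `x` are the adjacencies of `w` to the first `n` labelled vertices. -/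
def IsRow (G : SimpleGraph V) (v : ℕ → V) (n : ℕ) (w : V) (x : ℕ) : Prop :=
  x < 2 ^ n ∧ ∀ i < n, bit x i = true ↔ G.Adj (v i) w

/-- `e` is the code of the graph on the first `n` labelled vertices. -/
def Codes (G : SimpleGraph V) (v : ℕ → V) (n e : ℕ) : Prop :=
  e < 2 ^ pos 0 n ∧ ∀ j < n, ∀ i < j, bit e (pos i j) = true ↔ G.Adj (v i) (v j)

theorem exists_row (v : ℕ → V) (n : ℕ) (w : V) : ∃ x, IsRow G v n w x := by
  classical
  refine ⟨Nat.ofBits fun i : Fin n => decide (G.Adj (v i) w), Nat.ofBits_lt_two_pow _, ?_⟩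
  intro i hi
  rw [bit_eq, Nat.testBit_ofBits_lt _ _ hi]
  simp

theorem mem_rows {n x : ℕ} (hn : n = 4 ∨ n = 5 ∨ n = 6) (hx : x < 2 ^ n) : x ∈ rows n := by
  have h4 : ∀ x < 2 ^ 4, x ∈ rows 4 := by decide +kernel
  have h5 : ∀ x < 2 ^ 5, x ∈ rows 5 := by decide +kernel
  have h6 : ∀ x < 2 ^ 6, x ∈ rows 6 := by decide +kernel
  rcases hn with rfl | rfl | rfl
  exacts [h4 x hx, h5 x hx, h6 x hx]

theorem Codes.ext {v : ℕ → V} {n e x : ℕ} (he : Codes G v n e) (hx : IsRow G v n (v n) x) :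
    Codes G v (n + 1) (ext e (pos 0 n) x) := by
  refine ⟨by rw [pos_zero_succ]; exact ext_lt he.1 hx.1, fun j hj i hij => ?_⟩
  rw [bit_ext]
  rcases Nat.lt_succ_iff_lt_or_eq.1 hj with hj | rfl
  · have := pos_lt hij hj
    rw [← he.2 j hj i hij]
    simp [show ¬ pos 0 n ≤ pos i j by omega]
  · have h2 : pos i j = pos 0 j + i := rfl
    rw [h2, ← hx.2 i hij, bit_eq e, Nat.testBit_lt_two_pow
      (he.1.trans_le (Nat.pow_le_pow_right (by norm_num) (Nat.le_add_right _ _)))]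
    simp

theorem codes4 {v : ℕ → V} (h01 : G.Adj (v 0) (v 1)) (h12 : G.Adj (v 1) (v 2))
    (h23 : G.Adj (v 2) (v 3)) (h02 : ¬ G.Adj (v 0) (v 2)) (h03 : ¬ G.Adj (v 0) (v 3))
    (h13 : ¬ G.Adj (v 1) (v 3)) : Codes G v 4 code4 := by
  refine ⟨by decide, fun j hj i hij => ?_⟩
  have k : bit code4 0 = true ∧ bit code4 1 = false ∧ bit code4 2 = true ∧ bit code4 3 = false ∧
    bit code4 4 = false ∧ bit code4 5 = true := by decide
  interval_cases j <;> interval_cases i <;> simp [pos, *]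

/-- `q` describes four of the first `n` vertices. -/
def IsQuad (n : ℕ) (q : Quad) : Prop :=
  ∃ i j k l, i < j ∧ j < k ∧ k < l ∧ l < n ∧ q = quad i j k l

theorem isQuad_mk {n i j k l : ℕ} (hij : i < j) (hjk : j < k) (hkl : k < l) (hl : l < n) :
    IsQuad n (quad i j k l) := ⟨i, j, k, l, hij, hjk, hkl, hl, rfl⟩

theorem isQuad4 : ∀ q ∈ quads4, IsQuad 5 q := by
  simp only [quads4, List.forall_mem_cons]
  repeat' apply And.intro
  all_goals
    first
    | exact isQuad_mk (by norm_num) (by norm_num) (by norm_num) (by norm_num)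
    | simp

theorem isQuad5 : ∀ q ∈ quads5, IsQuad 6 q := by
  simp only [quads5, List.forall_mem_cons]
  repeat' apply And.intro
  all_goals
    first
    | exact isQuad_mk (by norm_num) (by norm_num) (by norm_num) (by norm_num)
    | simp

theorem isQuad6 : ∀ q ∈ quads6, IsQuad 7 q := by
  simp only [quads6, List.forall_mem_cons]
  repeat' apply And.intro
  all_goals
    first
    | exact isQuad_mk (by norm_num) (by norm_num) (by norm_num) (by norm_num)
    | simp

theorem isQuad7 : ∀ q ∈ quads7, IsQuad 8 q := by
  simp only [quads7, List.forall_mem_cons]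
  repeat' apply And.intro
  all_goals
    first
    | exact isQuad_mk (by norm_num) (by norm_num) (by norm_num) (by norm_num)
    | simp

theorem quadP4_iff {v : ℕ → V} {n e : ℕ} (hn : n ≤ 8) (hv : Set.InjOn v (range n))
    (he : Codes G v n e) {q : Quad} (hq : IsQuad n q) :
    quadP4 e q = true ↔ InducesP4 G (vs v q.mask) := by
  classical
  obtain ⟨i, j, k, l, hij, hjk, hkl, hl, rfl⟩ := hq
  have hs : vs v (quad i j k l).mask = {v i, v j, v k, v l} := by
    rw [vs, quad, onBits_quad l (by omega) k hkl j hjk i hij]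
    simp [image_insert]
  have hne : ∀ {a b}, a < b → b < n → v a ≠ v b := fun hab hb h =>
    hab.ne (hv (by simp; omega) (by simp; omega) h)
  have hbit : ∀ {a b}, a < b → b < n → bit e (pos a b) = decide (G.Adj (v a) (v b)) :=
    fun hab hb => by rw [Bool.eq_iff_iff, he.2 _ hb _ hab, decide_eq_true_eq]
  rw [hs, ← inducesP4_iff (hne hij (by omega)) (hne (hij.trans hjk) (by omega))
    (hne (hij.trans (hjk.trans hkl)) hl) (hne hjk (by omega)) (hne (hjk.trans hkl) hl) (hne hkl hl)]
  simp only [quadP4, quad]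
  rw [hbit hij (by omega), hbit (hij.trans hjk) (by omega),
    hbit (hij.trans (hjk.trans hkl)) hl, hbit hjk (by omega), hbit (hjk.trans hkl) hl, hbit hkl hl]

theorem allOf_mem {l : List ℕ} {f : ℕ → Bool} (h : allOf l f = true) : ∀ x ∈ l, f x = true := by
  induction l with
  | nil => simp
  | cons a l ih =>
    have h' : (f a && allOf l f) = true := h
    rw [Bool.and_eq_true] at h'
    simpa using ⟨h'.1, ih h'.2⟩

theorem anyP4_iff {e : ℕ} {qs : List Quad} : anyP4 e qs = true ↔ ∃ q ∈ qs, quadP4 e q = true := by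
  induction qs with
  | nil => simp [anyP4]
  | cons a l ih =>
    have h' : anyP4 e (a :: l) = (quadP4 e a || anyP4 e l) := rfl
    rw [h', Bool.or_eq_true, ih]
    simp

theorem select_sound {f : ℕ → Bool} {l acc : List ℕ} {k : List ℕ → Bool}
    (h : select f l acc k = true) :
    ∃ R, k R = true ∧ ∀ x, x ∈ R ↔ x ∈ acc ∨ (x ∈ l ∧ f x = true) := by
  induction l generalizing acc with
  | nil => exact ⟨acc, h, by simp⟩
  | cons a l ih =>
    have h' : (bif f a then select f l (a :: acc) k else select f l acc k) = true := h
    cases ha : f a with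
    | true =>
      rw [ha] at h'
      obtain ⟨R, h1, h2⟩ := ih h'
      refine ⟨R, h1, fun x => (h2 x).trans ?_⟩
      simp only [List.mem_cons]
      grind
    | false =>
      rw [ha] at h'
      obtain ⟨R, h1, h2⟩ := ih h'
      refine ⟨R, h1, fun x => (h2 x).trans ?_⟩
      simp only [List.mem_cons]
      grind

/-- If there are at most three `P₄`s then `collect` passes on the list of all of them. -/
theorem collect_sound {P : ℕ → Prop} {e : ℕ} {qs : List Quad} {acc : List ℕ} {k : List ℕ → Bool}
    (hq : ∀ q ∈ qs, quadP4 e q = true ↔ P q.mask) (hnd : (acc ++ qs.map Quad.mask).Nodup)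
    (hlen : ∀ B : List ℕ, B.Nodup →
      (∀ m ∈ B, m ∈ acc ∨ (m ∈ qs.map Quad.mask ∧ P m)) → B.length ≤ 3)
    (h : collect e qs acc k = true) :
    ∃ B, k B = true ∧ B.Nodup ∧ ∀ m, m ∈ B ↔ m ∈ acc ∨ (m ∈ qs.map Quad.mask ∧ P m) := by
  induction qs generalizing acc with
  | nil => exact ⟨acc, h, by simpa using hnd, by simp⟩
  | cons q l ih =>
    have h' : (bif quadP4 e q then moreThan3 (q.mask :: acc) || collect e l (q.mask :: acc) k
      else collect e l acc k) = true := h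
    have hq0 := hq q (by simp)
    cases ha : quadP4 e q with
    | true =>
      have hp : P q.mask := hq0.1 ha
      have hnd2 : (q.mask :: acc ++ l.map Quad.mask).Nodup := by
        rw [List.map_cons] at hnd
        exact List.nodup_middle.1 hnd
      have hl : (q.mask :: acc).length ≤ 3 := by
        refine hlen _ hnd2.of_append_left fun m hm => ?_
        rcases List.mem_cons.1 hm with rfl | hm
        · exact Or.inr ⟨by simp, hp⟩
        · exact Or.inl hm
      have h3 : moreThan3 (q.mask :: acc) = false := by
        match acc, hl with
        | [], _ => rfl
        | [_], _ => rfl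
        | [_, _], _ => rfl
        | _ :: _ :: _ :: _, hl => simp at hl; omega
      rw [ha, h3] at h'
      obtain ⟨B, h1, h2, h4⟩ := ih (fun q hq' => hq q (List.mem_cons_of_mem _ hq')) hnd2
        (fun B hB hm => hlen B hB fun m hmB => by
          rcases hm m hmB with h | ⟨h, h'⟩
          · rcases List.mem_cons.1 h with rfl | h
            · exact Or.inr ⟨by simp, hp⟩
            · exact Or.inl h
          · exact Or.inr ⟨List.mem_cons_of_mem _ h, h'⟩) h'
      refine ⟨B, h1, h2, fun m => (h4 m).trans ?_⟩
      simp only [List.map_cons, List.mem_cons]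
      grind
    | false =>
      have hp : ¬ P q.mask := fun hp => by simp [hq0.2 hp] at ha
      rw [ha] at h'
      obtain ⟨B, h1, h2, h4⟩ := ih (fun q hq' => hq q (List.mem_cons_of_mem _ hq'))
        (hnd.sublist (by simp)) (fun B hB hm => hlen B hB fun m hmB => by
          rcases hm m hmB with h | ⟨h, h'⟩
          · exact Or.inl h
          · exact Or.inr ⟨List.mem_cons_of_mem _ h, h'⟩) h'
      refine ⟨B, h1, h2, fun m => (h4 m).trans ?_⟩
      simp only [List.map_cons, List.mem_cons]
      grind

theorem vs_card {v : ℕ → V} {J : Finset ℕ} (hv : Set.InjOn v J) {m : ℕ} (hm : onBits m ⊆ J) :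
    (vs v m).card = (onBits m).card :=
  card_image_of_injOn (hv.mono (by exact_mod_cast hm))

/-- The hypothesis on `G`, for a list of bitmasks of sets among seven labelled vertices. -/
theorem length_le_three (h1 : SevenThreeGraph G) {v : ℕ → V} {J : Finset ℕ} (hJ : J.card = 7)
    (hv : Set.InjOn v J) {B : List ℕ} (hB : B.Nodup) (hm : ∀ m ∈ B, m < 2 ^ 8 ∧ onBits m ⊆ J ∧
      (onBits m).card = 4 ∧ InducesP4 G (vs v m)) : B.length ≤ 3 := by
  have hinj : Set.InjOn (vs v) (B.toFinset : Set ℕ) := by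
    intro m hm1 m' hm2 he
    have a1 := hm m (by simpa using hm1)
    have a2 := hm m' (by simpa using hm2)
    refine onBits_inj a1.1 a2.1 ?_
    have hc : ∀ {m m'}, onBits m ⊆ J → onBits m' ⊆ J → vs v m = vs v m' →
        onBits m ⊆ onBits m' := by
      intro m m' hm hm' he i hi
      have : v i ∈ vs v m' := he ▸ mem_image_of_mem v hi
      obtain ⟨i', hi', hii⟩ := mem_image.1 this
      rwa [← hv (hm' hi') (hm hi) hii]
    exact (hc a1.2.1 a2.2.1 he).antisymm (hc a2.2.1 a1.2.1 he.symm)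
  have hsub : ((B.toFinset.image (vs v) : Finset (Finset V)) : Set (Finset V)) ⊆
      {W | W ⊆ J.image v ∧ W.card = 4 ∧ InducesP4 G W} := by
    intro W hW
    obtain ⟨m, hmB, rfl⟩ := mem_image.1 (mem_coe.1 hW)
    obtain ⟨-, a2, a3, a4⟩ := hm m (by simpa using hmB)
    exact ⟨image_subset_image a2, (vs_card hv a2).trans a3, a4⟩
  have h3 := (Set.encard_le_encard hsub).trans (h1 _ ((card_image_of_injOn hv).trans hJ))
  rw [Set.encard_coe_eq_coe_finsetCard, card_image_of_injOn hinj,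
    List.toFinset_card_of_nodup hB] at h3
  exact_mod_cast h3

/-- `A` lists the bitmasks of the sets of four of the first `n` labelled vertices that induce
a `P₄`. -/
def Lists (G : SimpleGraph V) (v : ℕ → V) (n : ℕ) (A : List ℕ) : Prop :=
  A.Nodup ∧ ∀ m, m ∈ A ↔ m < 2 ^ n ∧ (onBits m).card = 4 ∧ InducesP4 G (vs v m)

/-- One step of the search: passing from the `P₄`s on `n` vertices to those on `n + 1`. -/
theorem collect_stage (h1 : SevenThreeGraph G) {v : ℕ → V} (hv : Set.InjOn v (range 7)) {n : ℕ}
    (hn : n < 7) {A : List ℕ} (hA : Lists G v n A) {e : ℕ} (he : Codes G v (n + 1) e)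
    {Q : List Quad} (hQ : ∀ q ∈ Q, IsQuad (n + 1) q) (hnd : (Q.map Quad.mask).Nodup)
    (hQm : ∀ m, m ∈ Q.map Quad.mask ↔ (m < 2 ^ (n + 1) ∧ 2 ^ n ≤ m ∧ (onBits m).card = 4))
    {k : List ℕ → Bool} (h : collect e Q A k = true) : ∃ B, k B = true ∧ Lists G v (n + 1) B := by
  have hpow : 2 ^ n ≤ 2 ^ (n + 1) := Nat.pow_le_pow_right (by norm_num) (by omega)
  have hpow8 : 2 ^ (n + 1) ≤ 2 ^ 8 := Nat.pow_le_pow_right (by norm_num) (by omega)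
  have hn7 : range (n + 1) ⊆ range 7 := range_subset_range.2 (by omega)
  obtain ⟨B, hk, hB, hmem⟩ := collect_sound (P := fun m => InducesP4 G (vs v m))
    (fun q hq => quadP4_iff (by omega) (hv.mono (by exact_mod_cast hn7)) he (hQ q hq))
    (List.nodup_append.2 ⟨hA.1, hnd, fun a ha b hb hab => by
      have h1 := (hA.2 a).1 ha
      have h2 := (hQm b).1 hb
      omega⟩)
    (fun B hB hm => length_le_three h1 (J := range 7) (by simp) hv hB fun m hmB => by
      have : m < 2 ^ (n + 1) ∧ (onBits m).card = 4 ∧ InducesP4 G (vs v m) := by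
        rcases hm m hmB with h | ⟨h, h'⟩
        · have := (hA.2 m).1 h
          exact ⟨by omega, this.2⟩
        · have := (hQm m).1 h
          exact ⟨this.1, this.2.2, h'⟩
      exact ⟨by omega, (onBits_subset_range this.1).trans hn7, this.2⟩) h
  refine ⟨B, hk, hB, fun m => (hmem m).trans ?_⟩
  rw [hA.2, hQm]
  constructor
  · rintro (h | ⟨h, h'⟩)
    · exact ⟨by omega, h.2⟩
    · exact ⟨h.1, h.2.2, h'⟩
  · rintro ⟨h, h', h''⟩
    by_cases hc : m < 2 ^ n
    · exact Or.inl ⟨hc, h', h''⟩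
    · exact Or.inr ⟨⟨h, by omega, h'⟩, h''⟩

theorem quads4_mask (m : ℕ) :
    m ∈ quads4.map Quad.mask ↔ (m < 2 ^ (4 + 1) ∧ 2 ^ 4 ≤ m ∧ (onBits m).card = 4) := by
  have h : ∀ m < 2 ^ 5, m ∈ quads4.map Quad.mask ↔
    (m < 2 ^ (4 + 1) ∧ 2 ^ 4 ≤ m ∧ (onBits m).card = 4) := by decide +kernel
  by_cases hm : m < 2 ^ 5
  · exact h m hm
  · have h2 : ∀ m ∈ quads4.map Quad.mask, m < 2 ^ 5 := by decide +kernel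
    exact iff_of_false (fun h => hm (h2 m h)) fun h => hm h.1

theorem quads5_mask (m : ℕ) :
    m ∈ quads5.map Quad.mask ↔ (m < 2 ^ (5 + 1) ∧ 2 ^ 5 ≤ m ∧ (onBits m).card = 4) := by
  have h : ∀ m < 2 ^ 6, m ∈ quads5.map Quad.mask ↔
    (m < 2 ^ (5 + 1) ∧ 2 ^ 5 ≤ m ∧ (onBits m).card = 4) := by decide +kernel
  by_cases hm : m < 2 ^ 6
  · exact h m hm
  · have h2 : ∀ m ∈ quads5.map Quad.mask, m < 2 ^ 6 := by decide +kernel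
    exact iff_of_false (fun h => hm (h2 m h)) fun h => hm h.1

theorem quads6_mask (m : ℕ) :
    m ∈ quads6.map Quad.mask ↔ (m < 2 ^ (6 + 1) ∧ 2 ^ 6 ≤ m ∧ (onBits m).card = 4) := by
  have h : ∀ m < 2 ^ 7, m ∈ quads6.map Quad.mask ↔
    (m < 2 ^ (6 + 1) ∧ 2 ^ 6 ≤ m ∧ (onBits m).card = 4) := by decide +kernel
  by_cases hm : m < 2 ^ 7
  · exact h m hm
  · have h2 : ∀ m ∈ quads6.map Quad.mask, m < 2 ^ 7 := by decide +kernel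
    exact iff_of_false (fun h => hm (h2 m h)) fun h => hm h.1

theorem quads7_mask (m : ℕ) : m ∈ quads7.map Quad.mask ↔
    (m < 2 ^ 8 ∧ (6 ∈ onBits m ∧ 7 ∈ onBits m) ∧ (onBits m).card = 4) := by
  have h : ∀ m < 2 ^ 8, m ∈ quads7.map Quad.mask ↔
    (m < 2 ^ 8 ∧ (6 ∈ onBits m ∧ 7 ∈ onBits m) ∧ (onBits m).card = 4) := by decide +kernel
  by_cases hm : m < 2 ^ 8
  · exact h m hm
  · have h2 : ∀ m ∈ quads7.map Quad.mask, m < 2 ^ 8 := by decide +kernel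
    exact iff_of_false (fun h => hm (h2 m h)) fun h => hm h.1

end Labels

/-! ### Sets of vertices that are `p₄`-connected -/

open Finset

section Grow

variable {V : Type*} [DecidableEq V] {G : SimpleGraph V}

set_option linter.unusedSectionVars false

/-- The subgraph induced by `S` is `p₄`-connected. -/
def PC (G : SimpleGraph V) (S : Finset V) : Prop :=
  ∀ A ⊆ S, A.Nonempty → (S \ A).Nonempty →
    ∃ W ⊆ S, W.card = 4 ∧ InducesP4 G W ∧ (W ∩ A).Nonempty ∧ (W \ A).Nonempty

/-- `a, b, c, d` is an induced path. -/
def Path4 (G : SimpleGraph V) (a b c d : V) : Prop :=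
  G.Adj a b ∧ G.Adj b c ∧ G.Adj c d ∧ ¬ G.Adj a c ∧ ¬ G.Adj a d ∧ ¬ G.Adj b d

theorem pc_of_inducesP4 {W : Finset V} (hc : W.card = 4) (hW : InducesP4 G W) : PC G W :=
  fun A hA h h' => ⟨W, Subset.rfl, hc, hW, by rwa [inter_eq_right.2 hA], h'⟩

theorem PC.grow {S W : Finset V} (hS : PC G S) (hc : W.card = 4) (hW : InducesP4 G W)
    (hSW : (W ∩ S).Nonempty) : PC G (S ∪ W) := by
  intro A hA hne hne'
  obtain ⟨s, hs⟩ := hSW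
  rw [mem_inter] at hs
  by_cases h1 : (S ∩ A).Nonempty
  · by_cases h2 : (S \ A).Nonempty
    · obtain ⟨W', h3, h4, h5, ⟨x, hx⟩, ⟨y, hy⟩⟩ := hS (S ∩ A) inter_subset_left h1
        (by obtain ⟨y, hy⟩ := h2; exact ⟨y, by simp at hy ⊢; tauto⟩)
      refine ⟨W', h3.trans subset_union_left, h4, h5, ⟨x, ?_⟩, ⟨y, ?_⟩⟩
      · simp at hx ⊢; tauto
      · have := @h3 y
        simp at hy ⊢; tauto
    · have h2' : S ⊆ A := by simpa [not_nonempty_iff_eq_empty] using h2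
      obtain ⟨y, hy⟩ := hne'
      refine ⟨W, subset_union_right, hc, hW, ⟨s, by simp [hs.1, h2' hs.2]⟩, ⟨y, ?_⟩⟩
      have := @h2' y
      simp at hy ⊢; tauto
  · have h1' : ∀ x ∈ S, x ∉ A := fun x hx hxA => h1 ⟨x, by simp [hx, hxA]⟩
    obtain ⟨x, hx⟩ := hne
    refine ⟨W, subset_union_right, hc, hW, ⟨x, ?_⟩, ⟨s, by simp [hs.1, h1' s hs.2]⟩⟩
    have := mem_union.1 (hA hx)
    have := h1' x
    simp; tauto

theorem PC.exists_path {S : Finset V} (hS : PC G S) (hc : 2 ≤ S.card) :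
    ∃ a b c d, {a, b, c, d} ⊆ S ∧ ({a, b, c, d} : Finset V).card = 4 ∧ Path4 G a b c d := by
  obtain ⟨x, hx, y, hy, hxy⟩ := one_lt_card.1 hc
  obtain ⟨W, h1, h2, h3, -⟩ := hS {x} (by simpa using hx) (by simp) ⟨y, by simp [hy, hxy.symm]⟩
  obtain ⟨a, b, c, d, rfl, h⟩ := path_of_inducesP4 h3
  exact ⟨a, b, c, d, h1, h2, h⟩

theorem lab_injOn {l : List V} (hl : l.Nodup) (d : V) :
    Set.InjOn (fun n => l.getD n d) (range l.length) := by
  intro i hi j hj h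
  simp only [coe_range, Set.mem_Iio] at hi hj
  simp only [List.getD_eq_getElem _ _ hi, List.getD_eq_getElem _ _ hj] at h
  exact (hl.getElem_inj_iff).1 h

theorem lab_image (l : List V) (d : V) :
    (range l.length).image (fun n => l.getD n d) = l.toFinset := by
  ext x
  simp only [mem_image, mem_range, List.mem_toFinset, List.mem_iff_getElem]
  constructor
  · rintro ⟨i, hi, rfl⟩
    exact ⟨i, hi, (List.getD_eq_getElem _ _ hi).symm⟩
  · rintro ⟨i, hi, rfl⟩
    exact ⟨i, hi, List.getD_eq_getElem _ _ hi⟩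

/-! ### Consequences of the finite search -/

theorem lists4 {v : ℕ → V} (h : Path4 G (v 0) (v 1) (v 2) (v 3)) : Lists G v 4 [15] := by
  refine ⟨by simp, fun m => ?_⟩
  have h15 : onBits 15 = {0, 1, 2, 3} := by decide +kernel
  have hu : ∀ m < 2 ^ 4, (onBits m).card = 4 → m = 15 := by decide +kernel
  constructor
  · intro hm
    obtain rfl : m = 15 := by simpa using hm
    refine ⟨by norm_num, by rw [h15]; rfl, ?_⟩
    obtain ⟨h1, h2, h3, h4, h5, h6⟩ := h
    have : vs v 15 = {v 0, v 1, v 2, v 3} := by rw [vs, h15]; simp [image_insert]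
    rw [this]
    exact inducesP4_of_path h1 h2 h3 h4 h5 h6
  · rintro ⟨h1, h2, -⟩
    simp [hu m h1 h2]

/-- The part common to both searches: the graph on the first six vertices. -/
theorem stages (h1 : SevenThreeGraph G) {v : ℕ → V} (hv : Set.InjOn v (range 7))
    (hp : Path4 G (v 0) (v 1) (v 2) (v 3)) {k : ℕ → ℕ → List ℕ → Bool}
    (h : (allOf (rows 4) fun x4 => collect (code5 x4) quads4 [15] fun A4 =>
      allOf (rows 5) fun x5 => collect (code6 x4 x5) quads5 A4 (k x4 x5)) = true) :
    ∃ x4 x5 A, IsRow G v 4 (v 4) x4 ∧ IsRow G v 5 (v 5) x5 ∧ Codes G v 6 (code6 x4 x5) ∧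
      Lists G v 6 A ∧ k x4 x5 A = true := by
  obtain ⟨x4, hx4⟩ := exists_row (G := G) v 4 (v 4)
  obtain ⟨x5, hx5⟩ := exists_row (G := G) v 5 (v 5)
  have c4 : Codes G v 4 code4 := by
    obtain ⟨h1, h2, h3, h4, h5, h6⟩ := hp
    exact codes4 h1 h2 h3 h4 h5 h6
  have c5 : Codes G v 5 (code5 x4) := c4.ext hx4
  have c6 : Codes G v 6 (code6 x4 x5) := c5.ext hx5
  obtain ⟨A4, hA4, hl4⟩ := collect_stage h1 hv (by norm_num) (lists4 hp) c5 isQuad4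
    (by decide +kernel) quads4_mask (allOf_mem h x4 (mem_rows (by simp) hx4.1))
  obtain ⟨A5, hA5, hl5⟩ := collect_stage h1 hv (by norm_num) hl4 c6 isQuad5
    (by decide +kernel) quads5_mask (allOf_mem hA4 x5 (mem_rows (by simp) hx5.1))
  exact ⟨x4, x5, A5, hx4, hx5, c6, hl5, hA5⟩

theorem exists_mask_of_subset {v : ℕ → V} {n : ℕ} (hn : n ≤ 8) (hv : Set.InjOn v (range n))
    {W : Finset V} (hW : W ⊆ (range n).image v) :
    ∃ m < 2 ^ n, vs v m = W ∧ (onBits m).card = W.card := by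
  obtain ⟨T, hT, rfl⟩ := subset_image_iff.1 hW
  obtain ⟨m, hm, rfl⟩ := exists_mask hn hT
  exact ⟨m, hm, rfl, (vs_card hv hT).symm⟩

theorem split_sound {v : ℕ → V} {n : ℕ} (hn : n ≤ 8) (hv : Set.InjOn v (range n)) {A : List ℕ}
    (hA : Lists G v n A) (h : split (2 ^ n - 1) A = true) : ¬ PC G ((range n).image v) := by
  intro hpc
  obtain ⟨c, hc⟩ : ∃ c, splitBy (2 ^ n - 1) A c = true := ⟨_, h⟩
  simp only [splitBy, Bool.and_eq_true, Nat.blt_eq, List.all_eq_true, Bool.or_eq_true,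
    Nat.beq_eq] at hc
  obtain ⟨⟨hc0, hcn⟩, hc⟩ := hc
  have hcr := onBits_subset_range (show c < 2 ^ n by omega)
  have hp8 : 2 ^ n ≤ 2 ^ 8 := Nat.pow_le_pow_right (by norm_num) hn
  have h0 : (onBits c).Nonempty := by
    rw [nonempty_iff_ne_empty]
    intro h
    have : onBits 0 = ∅ := by decide
    have := onBits_inj (by omega) (by norm_num) (h.trans this.symm)
    omega
  have hlt : ∃ i ∈ range n, i ∉ onBits c := by
    by_contra! hcon
    have := onBits_inj (by omega) (by omega)
      ((hcr.antisymm hcon).trans (onBits_full hn).symm)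
    omega
  obtain ⟨i, hi, hic⟩ := hlt
  obtain ⟨W, hW, hW4, hP, ⟨x, hx⟩, ⟨y, hy⟩⟩ := hpc (vs v c) (image_subset_image hcr)
    (h0.image _) ⟨v i, by
      refine mem_sdiff.2 ⟨mem_image_of_mem _ hi, fun h => ?_⟩
      obtain ⟨j, hj, hij⟩ := mem_image.1 h
      exact hic (hv (hcr hj) hi hij ▸ hj)⟩
  obtain ⟨m, hm, rfl, hm4⟩ := exists_mask_of_subset hn hv hW
  rcases hc m ((hA.2 m).2 ⟨hm, hm4.trans hW4, hP⟩) with h | h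
  · obtain ⟨h1, h2⟩ := mem_inter.1 hx
    obtain ⟨i, hi, rfl⟩ := mem_image.1 h1
    obtain ⟨j, hj, hij⟩ := mem_image.1 h2
    have hij := hv (hcr hj) (onBits_subset_range hm hi) hij
    subst hij
    have := mem_inter.2 ⟨hi, hj⟩
    rw [mask_disjoint h] at this
    simp at this
  · exact (mem_sdiff.1 hy).2 (image_subset_image (mask_subset h) (mem_sdiff.1 hy).1)

theorem not_pc_labelled (h1 : SevenThreeGraph G) {v : ℕ → V} (hv : Set.InjOn v (range 7))
    (hp : Path4 G (v 0) (v 1) (v 2) (v 3)) : ¬ PC G ((range 7).image v) := by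
  obtain ⟨x4, x5, A5, -, -, c6, hl5, h⟩ := stages h1 hv hp check7_eq
  obtain ⟨x6, hx6⟩ := exists_row (G := G) v 6 (v 6)
  have c7 : Codes G v 7 (code7 x4 x5 x6) := c6.ext hx6
  obtain ⟨A6, hA6, hl6⟩ := collect_stage h1 hv (by norm_num) hl5 c7 isQuad6
    (by decide +kernel) quads6_mask (allOf_mem h x6 (mem_rows (by simp) hx6.1))
  exact split_sound (by norm_num) hv hl6 hA6

/-- No seven vertices induce a `p₄`-connected graph. -/
theorem not_pc_seven (h1 : SevenThreeGraph G) {S : Finset V} (hc : S.card = 7) : ¬ PC G S := by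
  intro hS
  obtain ⟨a, b, c, d, hW, hW4, hp⟩ := hS.exists_path (by omega)
  have h3 : (S \ {a, b, c, d}).card = 3 := by rw [card_sdiff_of_subset hW]; omega
  obtain ⟨e, f, g, hef, heg, hfg, hT⟩ := card_eq_three.1 h3
  have hl : [a, b, c, d, e, f, g].toFinset = S := by
    rw [← union_sdiff_of_subset hW, hT]
    ext; simp; tauto
  have hnd : [a, b, c, d, e, f, g].Nodup := by
    rw [← Multiset.coe_nodup, ← Multiset.toFinset_card_eq_card_iff_nodup]
    change [a, b, c, d, e, f, g].toFinset.card = 7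
    rw [hl, hc]
  refine not_pc_labelled h1 (v := fun n => [a, b, c, d, e, f, g].getD n a) (lab_injOn hnd a)
    (by simpa using hp) ?_
  have := lab_image [a, b, c, d, e, f, g] a
  rw [hl] at this
  rw [show range 7 = range [a, b, c, d, e, f, g].length from rfl, this]
  exact hS

/-- Two `P₄`s do not meet in a single vertex. -/
theorem inter_card_ne_one (h1 : SevenThreeGraph G) {W W' : Finset V} (hc : W.card = 4)
    (hc' : W'.card = 4) (hW : InducesP4 G W) (hW' : InducesP4 G W') : (W' ∩ W).card ≠ 1 := by
  intro h
  refine not_pc_seven h1 ?_ ((pc_of_inducesP4 hc hW).grow hc' hW'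
    (card_pos.1 (by omega)))
  have := card_union_add_card_inter W' W
  rw [union_comm]
  omega

/-- If `S` has six elements and is `p₄`-connected then no `P₄` has exactly one vertex
outside `S`. -/
theorem not_one_outside (h1 : SevenThreeGraph G) {S W : Finset V} (hS : PC G S) (hc : S.card = 6)
    (hW4 : W.card = 4) (hW : InducesP4 G W) {w : V} (hw : w ∉ S) (hwW : w ∈ W)
    (hsub : W ⊆ insert w S) : False := by
  have hne : (W ∩ S).Nonempty := by
    obtain ⟨x, hx, hxw⟩ := exists_mem_ne (by omega : 1 < W.card) w
    exact ⟨x, mem_inter.2 ⟨hx, (mem_insert.1 (hsub hx)).resolve_left hxw⟩⟩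
  refine not_pc_seven h1 ?_ (hS.grow hW4 hW hne)
  have : S ∪ W = insert w S := by
    ext x
    have := @hsub x
    simp only [mem_union, mem_insert] at this ⊢
    constructor
    · tauto
    · rintro (rfl | h)
      · exact Or.inr hwW
      · exact Or.inl h
  rw [this, card_insert_of_notMem hw, hc]

theorem anyP4_eq_false (h1 : SevenThreeGraph G) {v : ℕ → V} (hv : Set.InjOn v (range 6))
    (hS : PC G ((range 6).image v)) {w : V} (hw : w ∉ (range 6).image v) {e x : ℕ}
    (he : Codes G v 6 e) (hx : IsRow G v 6 w x) : anyP4 (ext e 15 x) quads6 = false := by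
  rw [← Bool.not_eq_true, anyP4_iff]
  rintro ⟨q, hq, hP⟩
  set v' := Function.update v 6 w with hv'
  have h6 : v' 6 = w := by simp [hv']
  have hlt : ∀ i < 6, v' i = v i := fun i hi => by simp [hv', hi.ne]
  have hi : Set.InjOn v' (range 7) := by
    intro i hi j hj hij
    simp only [coe_range, Set.mem_Iio] at hi hj
    have hw' : ∀ i < 6, v i ≠ w := fun i hi h => hw (mem_image.2 ⟨i, by simpa using hi, h⟩)
    rcases Nat.lt_succ_iff_lt_or_eq.1 hi with hi | rfl <;>
      rcases Nat.lt_succ_iff_lt_or_eq.1 hj with hj | rfl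
    · rw [hlt i hi, hlt j hj] at hij
      exact hv (by simpa using hi) (by simpa using hj) hij
    · rw [hlt i hi, h6] at hij
      exact absurd hij (hw' i hi)
    · rw [hlt j hj, h6] at hij
      exact absurd hij.symm (hw' j hj)
    · rfl
  have c6 : Codes G v' 6 e := ⟨he.1, fun j hj i hij => by
    rw [hlt j hj, hlt i (by omega)]; exact he.2 j hj i hij⟩
  have r6 : IsRow G v' 6 (v' 6) x := ⟨hx.1, fun i hi => by
    rw [hlt i hi, h6]; exact hx.2 i hi⟩
  have c7 : Codes G v' 7 (ext e 15 x) := c6.ext r6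
  have hI := (quadP4_iff (by norm_num) hi c7 (isQuad6 q hq)).1 hP
  have hm := (quads6_mask q.mask).1 (List.mem_map_of_mem hq)
  have hsub := onBits_subset_range hm.1
  have hmem : ∀ m < 2 ^ 7, 2 ^ 6 ≤ m → 6 ∈ onBits m := by decide +kernel
  refine not_one_outside h1 hS (by rw [card_image_of_injOn hv]; simp)
    ((vs_card hi hsub).trans hm.2.2) hI hw
    (by rw [← h6]; exact mem_image_of_mem _ (hmem _ hm.1 hm.2.1)) ?_
  intro y hy
  obtain ⟨i, hi, rfl⟩ := mem_image.1 hy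
  have hi7 := mem_range.1 (hsub hi)
  rcases Nat.lt_succ_iff_lt_or_eq.1 hi7 with hi | rfl
  · rw [hlt i hi]
    exact mem_insert_of_mem (mem_image_of_mem _ (by simpa using hi))
  · rw [h6]
    exact mem_insert_self _ _

/-- If six vertices are `p₄`-connected and some `P₄` meets them and has exactly two more vertices
then these eight vertices form a spider. -/
theorem spider_code (h1 : SevenThreeGraph G) {v : ℕ → V} (hv : Set.InjOn v (range 8))
    (hp : Path4 G (v 0) (v 1) (v 2) (v 3)) (hS : PC G ((range 6).image v)) {W : Finset V}
    (hW4 : W.card = 4) (hW : InducesP4 G W) (hsub : W ⊆ (range 8).image v) (hw6 : v 6 ∈ W)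
    (hw7 : v 7 ∈ W) :
    ∃ x4 x5 x6 x7, [x4, x5, x6, x7] ∈ spiderCodes ∧ Codes G v 8 (code8 x4 x5 x6 x7) := by
  classical
  have hv7 : Set.InjOn v (range 7) := hv.mono (by simp)
  have hv6 : Set.InjOn v (range 6) := hv.mono (by simp)
  obtain ⟨x4, x5, A5, hx4, hx5, c6, hl5, h⟩ := stages h1 hv7 hp check8_eq
  rw [Bool.or_eq_true] at h
  replace h := h.resolve_left fun h => split_sound (by norm_num) hv6 hl5 h hS
  obtain ⟨R, hR, hRm⟩ := select_sound h
  obtain ⟨x6, hx6⟩ := exists_row (G := G) v 6 (v 6)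
  obtain ⟨x, hx⟩ := exists_row (G := G) v 6 (v 7)
  have hout : ∀ j, 6 ≤ j → j < 8 → v j ∉ (range 6).image v := by
    intro j hj hj8 h
    obtain ⟨i, hi, hij⟩ := mem_image.1 h
    have hi := mem_range.1 hi
    have := hv (by simp; omega) (by simp; omega) hij
    omega
  have hmem : ∀ j, 6 ≤ j → j < 8 → ∀ x, IsRow G v 6 (v j) x → x ∈ R := by
    intro j hj hj8 x hx
    refine (hRm x).2 (Or.inr ⟨mem_rows (by simp) hx.1, ?_⟩)
    rw [Bool.not_eq_true']
    exact anyP4_eq_false h1 hv6 hS (hout j hj hj8) c6 hx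
  have hbits : ∀ x < 2 ^ 6, (∀ i < 6, bit (64 + x) i = bit x i) ∧ bit (64 + x) 6 = true ∧
      bit x 6 = false := by decide +kernel
  obtain ⟨x7, hx7, hx7m⟩ : ∃ x7, IsRow G v 7 (v 7) x7 ∧ x7 ∈ [x, 64 + x] := by
    have hlt := hx.1
    by_cases hadj : G.Adj (v 6) (v 7)
    · refine ⟨64 + x, ⟨by omega, fun i hi => ?_⟩, by simp⟩
      rcases Nat.lt_succ_iff_lt_or_eq.1 hi with hi | rfl
      · rw [(hbits x hlt).1 i hi, hx.2 i hi]
      · simp [hbits x hlt, hadj]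
    · refine ⟨x, ⟨by omega, fun i hi => ?_⟩, by simp⟩
      rcases Nat.lt_succ_iff_lt_or_eq.1 hi with hi | rfl
      · exact hx.2 i hi
      · simp [hbits x hlt, hadj]
  have c7 : Codes G v 7 (code7 x4 x5 x6) := c6.ext hx6
  have c8 : Codes G v 8 (code8 x4 x5 x6 x7) := c7.ext hx7
  have hfin := allOf_mem (allOf_mem (allOf_mem hR x6 (hmem 6 le_rfl (by norm_num) x6 hx6)) x
    (hmem 7 (by norm_num) (by norm_num) x hx)) x7 hx7m
  simp only [Bool.or_eq_true] at hfin
  refine ⟨x4, x5, x6, x7, ?_, c8⟩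
  rcases hfin with hfin | hfin | hfin
  · exfalso
    rw [Bool.not_eq_true', ← Bool.not_eq_true, anyP4_iff] at hfin
    obtain ⟨m, hm, rfl, hmc⟩ := exists_mask_of_subset le_rfl hv hsub
    have hin : ∀ j < 8, v j ∈ vs v m → j ∈ onBits m := by
      intro j hj h
      obtain ⟨i, hi, hij⟩ := mem_image.1 h
      exact hv (onBits_subset_range hm hi) (by simpa using hj) hij ▸ hi
    obtain ⟨q, hq, rfl⟩ := List.mem_map.1 ((quads7_mask m).2
      ⟨hm, ⟨hin 6 (by norm_num) hw6, hin 7 (by norm_num) hw7⟩, hmc.trans hW4⟩)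
    exact hfin ⟨q, hq, (quadP4_iff le_rfl hv c8 (isQuad7 q hq)).2 hW⟩
  · exfalso
    obtain ⟨i, hi, hcol⟩ := List.any_eq_true.1 hfin
    have hi6 : i < 6 := by
      have : ∀ i ∈ [0, 1, 2, 3, 4, 5], i < 6 := by decide
      exact this i hi
    have hbit : ∀ m < 2 ^ 8, bit m i = false → onBits m ⊆ (range 8).erase i := by
      intro m hm hb j hj
      refine mem_erase.2 ⟨?_, onBits_subset_range hm hj⟩
      rintro rfl
      simp [onBits, hb] at hj
    have h64 : ∀ m ∈ quads7.map Quad.mask, 2 ^ 6 ≤ m := by decide +kernel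
    have hmap : ∀ m, m ∈ (quads7.filter fun q => !(bit q.mask i)).map Quad.mask →
        m ∈ quads7.map Quad.mask ∧ bit m i = false := by
      intro m hm
      obtain ⟨q, hq, rfl⟩ := List.mem_map.1 hm
      rw [List.mem_filter] at hq
      exact ⟨List.mem_map_of_mem hq.1, by simpa using hq.2⟩
    obtain ⟨B, hB, -⟩ := collect_sound (P := fun m => InducesP4 G (vs v m))
      (fun q hq => quadP4_iff le_rfl hv c8 (isQuad7 q (List.mem_of_mem_filter hq)))
      (List.nodup_append.2 ⟨hl5.1.filter _,
        (show (quads7.map Quad.mask).Nodup by decide +kernel).sublist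
          (List.filter_sublist.map _), fun a ha b hb hab => by
        have h3 := ((hl5.2 a).1 (List.mem_of_mem_filter ha)).1
        have h4 := h64 b (hmap b hb).1
        omega⟩)
      (fun B hB hm => length_le_three h1 (J := (range 8).erase i)
        (by rw [card_erase_of_mem (by simp; omega)]; simp)
        (hv.mono (by exact_mod_cast erase_subset _ _)) hB fun m hmB => by
          rcases hm m hmB with h | ⟨h, h'⟩
          · rw [List.mem_filter] at h
            obtain ⟨k1, k2, k3⟩ := (hl5.2 m).1 h.1
            have k4 : m < 2 ^ 8 := by omega
            exact ⟨k4, hbit m k4 (by simpa using h.2), k2, k3⟩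
          · obtain ⟨k1, k2⟩ := hmap m h
            obtain ⟨k3, -, k4⟩ := (quads7_mask m).1 k1
            exact ⟨k3, hbit m k3 k2, k4, h'⟩) hcol
    simp at hB
  · simpa using hfin

end Grow

/-! ### Spiders -/

open Finset

section Spiders

variable {V : Type*} [DecidableEq V] {G : SimpleGraph V}

set_option linter.unusedSectionVars false

/-- A leg of a spider: a body vertex `p.1` and a foot `p.2`, adjacent exactly if the spider is thin
(`t = true`). -/
def Leg (G : SimpleGraph V) (t : Bool) (p : V × V) : Prop :=
  p.1 ≠ p.2 ∧ (G.Adj p.1 p.2 ↔ t = true)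

/-- How two distinct legs are joined: bodies are adjacent, feet are not, and the body of one is
adjacent to the foot of the other exactly if the spider is thick (`t = false`). -/
def Rel (G : SimpleGraph V) (t : Bool) (p q : V × V) : Prop :=
  (p.1 ≠ q.1 ∧ p.2 ≠ q.2 ∧ p.1 ≠ q.2 ∧ q.1 ≠ p.2) ∧
    (G.Adj p.1 q.1 ∧ ¬ G.Adj p.2 q.2 ∧ (G.Adj p.1 q.2 ↔ t = false) ∧ (G.Adj q.1 p.2 ↔ t = false))

/-- The legs in `L` form a (headless) spider, thin if `t = true` and thick if `t = false`. -/
def IsSpider (G : SimpleGraph V) (t : Bool) (L : Finset (V × V)) : Prop :=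
  (∀ p ∈ L, Leg G t p) ∧ ∀ p ∈ L, ∀ q ∈ L, p ≠ q → Rel G t p q

/-- The vertices of a set of legs. -/
def verts (L : Finset (V × V)) : Finset V := L.image Prod.fst ∪ L.image Prod.snd

theorem mem_verts {L : Finset (V × V)} {x : V} : x ∈ verts L ↔ ∃ p ∈ L, x = p.1 ∨ x = p.2 := by
  simp only [verts, mem_union, mem_image]
  constructor
  · rintro (⟨p, hp, rfl⟩ | ⟨p, hp, rfl⟩)
    exacts [⟨p, hp, Or.inl rfl⟩, ⟨p, hp, Or.inr rfl⟩]
  · rintro ⟨p, hp, rfl | rfl⟩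
    exacts [Or.inl ⟨p, hp, rfl⟩, Or.inr ⟨p, hp, rfl⟩]

theorem Rel.symm {t : Bool} {p q : V × V} (h : Rel G t p q) : Rel G t q p := by
  obtain ⟨⟨h1, h2, h3, h4⟩, h5, h6, h7, h8⟩ := h
  exact ⟨⟨h1.symm, h2.symm, h4, h3⟩, h5.symm, fun h => h6 h.symm, h8, h7⟩

theorem IsSpider.subset {t : Bool} {L M : Finset (V × V)} (h : IsSpider G t L) (hM : M ⊆ L) :
    IsSpider G t M :=
  ⟨fun p hp => h.1 p (hM hp), fun p hp q hq => h.2 p (hM hp) q (hM hq)⟩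

theorem path4_thin {p q : V × V} (hp : Leg G true p) (hq : Leg G true q) (h : Rel G true p q) :
    Path4 G p.2 p.1 q.1 q.2 := by
  obtain ⟨-, h5, h6, h7, h8⟩ := h
  have hp2 := hp.2
  have hq2 := hq.2
  simp only [iff_true, reduceCtorEq, iff_false] at *
  exact ⟨hp2.symm, h5, hq2, fun h => h8 h.symm, h6, h7⟩

theorem path4_thick {p q : V × V} (hp : Leg G false p) (hq : Leg G false q) (h : Rel G false p q) :
    Path4 G p.2 q.1 p.1 q.2 := by
  obtain ⟨-, h5, h6, h7, h8⟩ := h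
  have hp2 := hp.2
  have hq2 := hq.2
  simp only [iff_true, reduceCtorEq, iff_false] at *
  exact ⟨h8.symm, h5.symm, h7, fun h => hp2 h.symm, h6, hq2⟩

theorem inducesP4_legs {t : Bool} {p q : V × V} (hp : Leg G t p) (hq : Leg G t q)
    (h : Rel G t p q) : InducesP4 G {p.1, p.2, q.1, q.2} := by
  cases t with
  | true =>
    obtain ⟨h1, h2, h3, h4, h5, h6⟩ := path4_thin hp hq h
    have := inducesP4_of_path h1 h2 h3 h4 h5 h6
    rwa [show ({p.2, p.1, q.1, q.2} : Finset V) = {p.1, p.2, q.1, q.2} by ext; simp; tauto] at this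
  | false =>
    obtain ⟨h1, h2, h3, h4, h5, h6⟩ := path4_thick hp hq h
    have := inducesP4_of_path h1 h2 h3 h4 h5 h6
    rwa [show ({p.2, q.1, p.1, q.2} : Finset V) = {p.1, p.2, q.1, q.2} by ext; simp; tauto] at this

theorem card_legs {t : Bool} {p q : V × V} (hp : Leg G t p) (hq : Leg G t q)
    (h : Rel G t p q) : ({p.1, p.2, q.1, q.2} : Finset V).card = 4 := by
  obtain ⟨⟨h1, h2, h3, h4⟩, -⟩ := h
  rw [card_insert_of_notMem, card_insert_of_notMem, card_insert_of_notMem, card_singleton]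
  · simpa using hq.1
  · simp [h4.symm, h2]
  · simp [hp.1, h1, h3]

theorem verts_three (p q r : V × V) :
    verts {p, q, r} = {p.1, p.2, q.1, q.2} ∪ {p.1, p.2, r.1, r.2} := by
  ext x
  simp only [mem_verts, mem_insert, mem_singleton, mem_union]
  constructor
  · rintro ⟨s, rfl | rfl | rfl, h⟩ <;> tauto
  · rintro ((h | h | h | h) | (h | h | h | h))
    exacts [⟨p, by tauto⟩, ⟨p, by tauto⟩, ⟨q, by tauto⟩, ⟨q, by tauto⟩, ⟨p, by tauto⟩,
      ⟨p, by tauto⟩, ⟨r, by tauto⟩, ⟨r, by tauto⟩]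

theorem IsSpider.pc_verts {t : Bool} {M : Finset (V × V)} (hM : IsSpider G t M) (hc : M.card = 3) :
    PC G (verts M) := by
  obtain ⟨p, q, r, hpq, hpr, hqr, rfl⟩ := card_eq_three.1 hc
  have lp := hM.1 p (by simp)
  have lq := hM.1 q (by simp)
  have lr := hM.1 r (by simp)
  have rpq := hM.2 p (by simp) q (by simp) hpq
  have rpr := hM.2 p (by simp) r (by simp) hpr
  rw [verts_three]
  exact (pc_of_inducesP4 (card_legs lp lq rpq) (inducesP4_legs lp lq rpq)).grow
    (card_legs lp lr rpr) (inducesP4_legs lp lr rpr) ⟨p.1, by simp⟩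

theorem IsSpider.card_verts {t : Bool} {M : Finset (V × V)} (hM : IsSpider G t M) :
    (verts M).card = 2 * M.card := by
  have key : ∀ p ∈ M, ∀ q ∈ M, (p.1 = q.1 → p = q) ∧ (p.2 = q.2 → p = q) ∧ p.1 ≠ q.2 := by
    intro p hp q hq
    by_cases h : p = q
    · subst h
      simpa using (hM.1 p hp).1
    · obtain ⟨⟨h1, h2, h3, -⟩, -⟩ := hM.2 p hp q hq h
      simp [h1, h2, h3]
  rw [verts, card_union_of_disjoint, card_image_of_injOn, card_image_of_injOn, two_mul]
  · exact fun p hp q hq h => (key p hp q hq).2.1 h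
  · exact fun p hp q hq h => (key p hp q hq).1 h
  · rw [Finset.disjoint_left]
    intro x hx hx'
    obtain ⟨p, hp, rfl⟩ := mem_image.1 hx
    obtain ⟨q, hq, hpq⟩ := mem_image.1 hx'
    exact (key p hp q hq).2.2 hpq.symm

/-! ### Reading off spiders from codes -/

/-- Whether `i ≠ j` are adjacent in the graph with code `e`. -/
def adjB (e i j : ℕ) : Bool := bif Nat.blt i j then bit e (pos i j) else bit e (pos j i)

/-- `Leg` for labels in the graph with code `e`. -/
def legB (e : ℕ) (t : Bool) (p : ℕ × ℕ) : Bool := !(p.1 == p.2) && (adjB e p.1 p.2 == t)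

/-- `Rel` for labels in the graph with code `e`. -/
def relB (e : ℕ) (t : Bool) (p q : ℕ × ℕ) : Bool :=
  (!(p.1 == q.1) && !(p.2 == q.2) && !(p.1 == q.2) && !(q.1 == p.2)) &&
    (adjB e p.1 q.1 && !(adjB e p.2 q.2) && (adjB e p.1 q.2 == !t) && (adjB e q.1 p.2 == !t))

/-- Whether three pairs of labels are the legs of a spider. -/
def spiderB (e : ℕ) (t : Bool) (s : (ℕ × ℕ) × (ℕ × ℕ) × (ℕ × ℕ)) : Bool :=
  (legB e t s.1 && legB e t s.2.1 && legB e t s.2.2) &&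
    (relB e t s.1 s.2.1 && relB e t s.1 s.2.2 && relB e t s.2.1 s.2.2)

/-- Whether the leg `n` fits to the leg `p`. -/
def fitsB (e : ℕ) (t : Bool) (n p : ℕ × ℕ) : Bool := legB e t n && relB e t n p

/-- `n` is a leg that can stand next to the leg `p` in a spider. -/
def Fits (G : SimpleGraph V) (t : Bool) (n p : V × V) : Prop := Leg G t n ∧ Rel G t n p

/-- The possible legs on the first six vertices when `0, 1, 2, 3` is a path. -/
def legTable : List ((ℕ × ℕ) × (ℕ × ℕ) × (ℕ × ℕ)) :=
  [((1, 0), (2, 3), (5, 4)), ((1, 0), (2, 3), (4, 5)), ((2, 0), (1, 3), (5, 4)),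
    ((2, 0), (1, 3), (4, 5))]

/-- The code of the graph on eight vertices with the given last four rows. -/
def codeOf : List ℕ → ℕ
  | [a, b, c, d] => code8 a b c d
  | _ => 0

theorem exists_legs : ∀ l ∈ spiderCodes, ∃ t : Bool, ∃ s ∈ legTable,
    spiderB (codeOf l) t s = true := by decide +kernel

theorem legs_fit : ∀ l ∈ spiderCodes, ∀ t : Bool, ∀ s ∈ legTable,
    spiderB (codeOf l) t s = true →
      (∀ p ∈ [s.1, s.2.1, s.2.2], fitsB (codeOf l) t (6, 7) p = true) ∨
        (∀ p ∈ [s.1, s.2.1, s.2.2], fitsB (codeOf l) t (7, 6) p = true) := by decide +kernel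

theorem legTable_lt : ∀ s ∈ legTable, (s.1.1 < 8 ∧ s.1.2 < 8) ∧ (s.2.1.1 < 8 ∧ s.2.1.2 < 8) ∧
    (s.2.2.1 < 8 ∧ s.2.2.2 < 8) := by decide +kernel

theorem adjB_iff {v : ℕ → V} {e : ℕ} (he : Codes G v 8 e) {i j : ℕ} (hi : i < 8) (hj : j < 8)
    (hij : i ≠ j) : adjB e i j = true ↔ G.Adj (v i) (v j) := by
  unfold adjB
  by_cases h : i < j
  · have h' : Nat.blt i j = true := by simpa using h
    rw [h', cond_true, he.2 j hj i h]
  · have h' : Nat.blt i j = false := by rw [← Bool.not_eq_true]; simpa using h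
    rw [h', cond_false, he.2 i hi j (by omega), G.adj_comm]

theorem label_eq {v : ℕ → V} (hv : Set.InjOn v (range 8)) {i j : ℕ} (hi : i < 8) (hj : j < 8) :
    v i = v j ↔ i = j :=
  ⟨fun h => hv (by simpa using hi) (by simpa using hj) h, fun h => h ▸ rfl⟩

theorem legB_iff {v : ℕ → V} (hv : Set.InjOn v (range 8)) {e : ℕ} (he : Codes G v 8 e) {t : Bool}
    {p : ℕ × ℕ} (hp : p.1 < 8 ∧ p.2 < 8) : legB e t p = true ↔ Leg G t (p.map v v) := by
  by_cases h : p.1 = p.2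
  · simp [legB, Leg, h]
  · simp only [legB, Leg, Prod.map_fst, Prod.map_snd, ← adjB_iff he hp.1 hp.2 h, ne_eq,
      label_eq hv hp.1 hp.2, Bool.and_eq_true, Bool.not_eq_true', beq_eq_false_iff_ne, beq_iff_eq]
    rw [Bool.eq_iff_iff]

theorem relB_iff {v : ℕ → V} (hv : Set.InjOn v (range 8)) {e : ℕ} (he : Codes G v 8 e) {t : Bool}
    {p q : ℕ × ℕ} (hp : p.1 < 8 ∧ p.2 < 8) (hq : q.1 < 8 ∧ q.2 < 8) :
    relB e t p q = true ↔ Rel G t (p.map v v) (q.map v v) := by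
  simp only [relB, Rel, Prod.map_fst, Prod.map_snd, ne_eq,
      label_eq hv hp.1 hq.1, label_eq hv hp.1 hq.2, label_eq hv hp.2 hq.2, label_eq hv hq.1 hp.2,
      Bool.and_eq_true, Bool.not_eq_true', beq_eq_false_iff_ne, beq_iff_eq, and_assoc]
  refine and_congr_right fun h1 => and_congr_right fun h2 => and_congr_right fun h3 =>
    and_congr_right fun h4 => ?_
  rw [← adjB_iff he hp.1 hq.1 h1, ← adjB_iff he hp.2 hq.2 h2, ← adjB_iff he hp.1 hq.2 h3,
    ← adjB_iff he hq.1 hp.2 h4]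
  cases t <;> simp

theorem isSpider_three {t : Bool} {p q r : V × V} (lp : Leg G t p) (lq : Leg G t q)
    (lr : Leg G t r) (rpq : Rel G t p q) (rpr : Rel G t p r) (rqr : Rel G t q r) :
    IsSpider G t {p, q, r} := by
  constructor
  · intro s hs
    simp only [mem_insert, mem_singleton] at hs
    rcases hs with rfl | rfl | rfl <;> assumption
  · intro s hs s' hs' hne
    simp only [mem_insert, mem_singleton] at hs hs'
    rcases hs with rfl | rfl | rfl <;> rcases hs' with rfl | rfl | rfl <;>
      first | exact absurd rfl hne | assumption | (apply Rel.symm; assumption)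

theorem Rel.ne {t : Bool} {p q : V × V} (h : Rel G t p q) : p ≠ q := by
  rintro rfl
  exact h.1.1 rfl

/-- A `P₄` that leaves a set of six `p₄`-connected vertices in two vertices leads to a spider. -/
theorem exists_spider (h1 : SevenThreeGraph G) {S W : Finset V} (hS : PC G S) (hc : S.card = 6)
    (hW4 : W.card = 4) (hW : InducesP4 G W) (hWS : (W \ S).card = 2) :
    ∃ t L, IsSpider G t L ∧ L.card = 3 := by
  obtain ⟨a, b, c, d, hT, hT4, hp⟩ := hS.exists_path (by omega)
  have h3 : (S \ {a, b, c, d}).card = 2 := by rw [card_sdiff_of_subset hT]; omega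
  obtain ⟨e, f, hef, hR⟩ := card_eq_two.1 h3
  obtain ⟨x, y, hxy, hxyW⟩ := card_eq_two.1 hWS
  have hl6 : [a, b, c, d, e, f].toFinset = S := by
    rw [← union_sdiff_of_subset hT, hR]
    ext; simp; tauto
  have hl8 : [a, b, c, d, e, f, x, y].toFinset = S ∪ W \ S := by
    rw [hxyW, ← hl6]
    ext; simp; tauto
  have hnd : [a, b, c, d, e, f, x, y].Nodup := by
    rw [← Multiset.coe_nodup, ← Multiset.toFinset_card_eq_card_iff_nodup]
    change [a, b, c, d, e, f, x, y].toFinset.card = 8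
    rw [hl8, card_union_of_disjoint disjoint_sdiff, hc, hWS]
  have hmem : x ∈ W ∧ y ∈ W := by
    constructor
    · exact (mem_sdiff.1 (hxyW ▸ mem_insert_self x _)).1
    · exact (mem_sdiff.1 (hxyW ▸ mem_insert_of_mem (mem_singleton_self y))).1
  have hv := lab_injOn hnd a
  have i6 : (range 6).image (fun n => [a, b, c, d, e, f, x, y].getD n a) = S := by
    rw [← hl6, ← lab_image _ a]
    refine image_congr fun i hi => ?_
    have hi : i < 6 := by simpa using hi
    interval_cases i <;> rfl
  have i8 : (range 8).image (fun n => [a, b, c, d, e, f, x, y].getD n a) = S ∪ W \ S := by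
    rw [← hl8, ← lab_image _ a]
    rfl
  obtain ⟨x4, x5, x6, x7, hl, he⟩ := spider_code h1
    (v := fun n => [a, b, c, d, e, f, x, y].getD n a) hv hp (by rw [i6]; exact hS) hW4 hW
    (by rw [i8]; intro z hz; by_cases h : z ∈ S <;> simp [h, hz]) hmem.1 hmem.2
  obtain ⟨t, s, hs, hB⟩ := exists_legs _ hl
  obtain ⟨b1, b2, b3⟩ := legTable_lt s hs
  simp only [spiderB, Bool.and_eq_true] at hB
  obtain ⟨⟨⟨k1, k2⟩, k3⟩, ⟨k4, k5⟩, k6⟩ := hB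
  have k4' := (relB_iff hv he b1 b2).1 k4
  have k5' := (relB_iff hv he b1 b3).1 k5
  have k6' := (relB_iff hv he b2 b3).1 k6
  exact ⟨t, _, isSpider_three ((legB_iff hv he b1).1 k1) ((legB_iff hv he b2).1 k2)
    ((legB_iff hv he b3).1 k3) k4' k5' k6', card_eq_three.2 ⟨_, _, _, k4'.ne, k5'.ne, k6'.ne, rfl⟩⟩

/-- The eight labels of three legs and two further vertices, in an order in which the first four
form a path. -/
def labels (t : Bool) (p q r : V × V) (x y : V) : List V :=
  [p.2, bif t then p.1 else q.1, bif t then q.1 else p.1, q.2, r.2, r.1, x, y]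

/-- A `P₄` that leaves a spider with three legs in two vertices adds a leg to it. -/
theorem extend_three (h1 : SevenThreeGraph G) {t : Bool} {M : Finset (V × V)}
    (hM : IsSpider G t M) (hc : M.card = 3) {W : Finset V} {x y : V} (hxy : x ≠ y)
    (hx : x ∉ verts M) (hy : y ∉ verts M) (hW4 : W.card = 4) (hW : InducesP4 G W) (hxW : x ∈ W)
    (hyW : y ∈ W) (hsub : W ⊆ verts M ∪ {x, y}) :
    (∀ p ∈ M, Fits G t (x, y) p) ∨ (∀ p ∈ M, Fits G t (y, x) p) := by
  have hpc := hM.pc_verts hc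
  have hcard := hM.card_verts
  obtain ⟨p, q, r, hpq, hpr, hqr, rfl⟩ := card_eq_three.1 hc
  have lp := hM.1 p (by simp)
  have lq := hM.1 q (by simp)
  have lr := hM.1 r (by simp)
  have rpq := hM.2 p (by simp) q (by simp) hpq
  have rpr := hM.2 p (by simp) r (by simp) hpr
  have rqr := hM.2 q (by simp) r (by simp) hqr
  have hl6 : [p.2, bif t then p.1 else q.1, bif t then q.1 else p.1, q.2, r.2, r.1].toFinset =
      verts {p, q, r} := by
    rw [verts_three]
    cases t <;> ext z <;> simp only [List.mem_toFinset, List.mem_cons, mem_union, mem_insert,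
      mem_singleton, cond_true, cond_false, List.not_mem_nil, or_false] <;> grind
  have hl8 : (labels t p q r x y).toFinset = verts {p, q, r} ∪ {x, y} := by
    rw [← hl6, show labels t p q r x y =
      [p.2, bif t then p.1 else q.1, bif t then q.1 else p.1, q.2, r.2, r.1] ++ [x, y] from rfl,
      List.toFinset_append]
    simp
  have hnd : (labels t p q r x y).Nodup := by
    rw [← Multiset.coe_nodup, ← Multiset.toFinset_card_eq_card_iff_nodup]
    change (labels t p q r x y).toFinset.card = 8
    rw [hl8, card_union_of_disjoint, hcard, hc, card_pair hxy]
    rw [Finset.disjoint_left]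
    rintro z hz hz'
    rcases mem_insert.1 hz' with rfl | hz'
    · exact hx hz
    · exact hy (mem_singleton.1 hz' ▸ hz)
  have hv : Set.InjOn (fun n => (labels t p q r x y).getD n x) (range 8) := lab_injOn hnd x
  have i6 : (range 6).image (fun n => (labels t p q r x y).getD n x) = verts {p, q, r} := by
    rw [← hl6, ← lab_image _ x]
    refine image_congr fun i hi => ?_
    have hi : i < 6 := by simpa using hi
    interval_cases i <;> rfl
  have i8 : (range 8).image (fun n => (labels t p q r x y).getD n x) =
      verts {p, q, r} ∪ {x, y} := by
    rw [← hl8, ← lab_image _ x]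
    rfl
  have hpath : Path4 G p.2 (bif t then p.1 else q.1) (bif t then q.1 else p.1) q.2 := by
    cases t with
    | true => exact path4_thin lp lq rpq
    | false => exact path4_thick lp lq rpq
  obtain ⟨x4, x5, x6, x7, hl, he⟩ := spider_code h1
    (v := fun n => (labels t p q r x y).getD n x) hv hpath (by rw [i6]; exact hpc) hW4 hW
    (by rw [i8]; exact hsub) hxW hyW
  obtain ⟨s, hs, e1, e2, e3⟩ : ∃ s ∈ legTable,
      s.1.map (fun n => (labels t p q r x y).getD n x) (fun n => (labels t p q r x y).getD n x) = p
      ∧ s.2.1.map (fun n => (labels t p q r x y).getD n x)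
        (fun n => (labels t p q r x y).getD n x) = q
      ∧ s.2.2.map (fun n => (labels t p q r x y).getD n x)
        (fun n => (labels t p q r x y).getD n x) = r := by
    cases t with
    | true => exact ⟨((1, 0), (2, 3), (5, 4)), by simp [legTable], rfl, rfl, rfl⟩
    | false => exact ⟨((2, 0), (1, 3), (5, 4)), by simp [legTable], rfl, rfl, rfl⟩
  obtain ⟨b1, b2, b3⟩ := legTable_lt s hs
  have b67 : ((6, 7) : ℕ × ℕ).1 < 8 ∧ ((6, 7) : ℕ × ℕ).2 < 8 := by simp
  have b76 : ((7, 6) : ℕ × ℕ).1 < 8 ∧ ((7, 6) : ℕ × ℕ).2 < 8 := by simp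
  have hB : spiderB (codeOf [x4, x5, x6, x7]) t s = true := by
    simp only [spiderB, Bool.and_eq_true]
    refine ⟨⟨⟨?_, ?_⟩, ?_⟩, ⟨?_, ?_⟩, ?_⟩
    · exact (legB_iff hv he b1).2 (by rw [e1]; exact lp)
    · exact (legB_iff hv he b2).2 (by rw [e2]; exact lq)
    · exact (legB_iff hv he b3).2 (by rw [e3]; exact lr)
    · exact (relB_iff hv he b1 b2).2 (by rw [e1, e2]; exact rpq)
    · exact (relB_iff hv he b1 b3).2 (by rw [e1, e3]; exact rpr)
    · exact (relB_iff hv he b2 b3).2 (by rw [e2, e3]; exact rqr)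
  have hfit : ∀ {n : ℕ × ℕ}, n.1 < 8 ∧ n.2 < 8 →
      (∀ p ∈ [s.1, s.2.1, s.2.2], fitsB (codeOf [x4, x5, x6, x7]) t n p = true) →
      ∀ o ∈ ({p, q, r} : Finset (V × V)), Fits G t
        (n.map (fun n => (labels t p q r x y).getD n x)
          (fun n => (labels t p q r x y).getD n x)) o := by
    intro n hn hall o ho
    simp only [List.forall_mem_cons, fitsB, Bool.and_eq_true] at hall
    obtain ⟨⟨k1, k2⟩, ⟨-, k3⟩, ⟨-, k4⟩, -⟩ := hall
    refine ⟨(legB_iff hv he hn).1 k1, ?_⟩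
    simp only [mem_insert, mem_singleton] at ho
    rcases ho with rfl | rfl | rfl
    · have := (relB_iff hv he hn b1).1 k2
      rwa [e1] at this
    · have := (relB_iff hv he hn b2).1 k3
      rwa [e2] at this
    · have := (relB_iff hv he hn b3).1 k4
      rwa [e3] at this
  exact (legs_fit _ hl t s hs hB).imp (hfit b67) (hfit b76)

end Spiders

/-! ### The graph is a spider -/

open Finset

section Structure

variable {V : Type*} [Fintype V] [DecidableEq V] {G : SimpleGraph V}

set_option linter.unusedSectionVars false

theorem exists_crossing (h2 : P4Connected G) {S : Finset V} (hS : S.Nonempty) (hS' : S ≠ univ) :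
    ∃ W : Finset V, W.card = 4 ∧ InducesP4 G W ∧ (W ∩ S).Nonempty ∧ (W \ S).Nonempty := by
  have hne : ((S : Set V)ᶜ).Nonempty := by
    by_contra h
    rw [Set.not_nonempty_iff_eq_empty, Set.compl_empty_iff] at h
    exact hS' (coe_eq_univ.1 h)
  obtain ⟨W, h4, hP, ⟨x, hx⟩, ⟨y, hy⟩⟩ := h2 S (by exact_mod_cast hS) hne
  exact ⟨W, h4, hP, ⟨x, by simpa using hx⟩, ⟨y, by simpa using hy⟩⟩

/-- Some six vertices are `p₄`-connected. -/
theorem exists_pc_six (h1 : SevenThreeGraph G) (h2 : P4Connected G) (h7 : 7 ≤ Fintype.card V) :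
    ∃ S : Finset V, S.card = 6 ∧ PC G S := by
  have hproper : ∀ S : Finset V, S.card ≤ 6 → S ≠ univ := by
    rintro S hS rfl
    rw [card_univ] at hS
    omega
  obtain ⟨x⟩ : Nonempty V := Fintype.card_pos_iff.1 (by omega)
  obtain ⟨W, hW4, hW, -⟩ := exists_crossing h2 (singleton_nonempty x)
    (hproper {x} (by simp))
  obtain ⟨W', hW4', hW', hne, hne'⟩ := exists_crossing h2 (card_pos.1 (by omega))
    (hproper W (by omega))
  have hi := inter_card_ne_one h1 hW4 hW4' hW hW'
  have c1 := card_pos.2 hne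
  have c2 := card_pos.2 hne'
  have c3 := card_inter_add_card_sdiff W' W
  have c4 : (W ∪ W').card = W.card + (W' \ W).card := by
    rw [← union_sdiff_self_eq_union, card_union_of_disjoint disjoint_sdiff]
  have hpc := (pc_of_inducesP4 hW4 hW).grow hW4' hW' hne
  by_cases h6 : (W ∪ W').card = 6
  · exact ⟨_, h6, hpc⟩
  have h5 : (W ∪ W').card = 5 := by omega
  obtain ⟨U, hU4, hU, une, une'⟩ := exists_crossing h2 (card_pos.1 (by omega))
    (hproper (W ∪ W') (by omega))
  have d1 := card_pos.2 une
  have d2 := card_pos.2 une'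
  have d3 := card_inter_add_card_sdiff U (W ∪ W')
  have d4 : (W ∪ W' ∪ U).card = (W ∪ W').card + (U \ (W ∪ W')).card := by
    rw [← union_sdiff_self_eq_union, card_union_of_disjoint disjoint_sdiff]
  have hpc' := hpc.grow hU4 hU une
  have d5 : (W ∪ W' ∪ U).card ≠ 7 := fun h => not_pc_seven h1 h hpc'
  have d6 : (U ∩ (W ∪ W')).card ≠ 1 := by
    intro h
    obtain ⟨s, hs⟩ := une
    have hle : ∀ T ⊆ W ∪ W', (U ∩ T).card ≤ 1 := fun T hT =>
      h ▸ card_le_card (inter_subset_inter_left hT)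
    rw [mem_inter, mem_union] at hs
    rcases hs.2 with hsW | hsW
    · have := card_pos.2 ⟨s, mem_inter.2 ⟨hs.1, hsW⟩⟩
      have := hle W subset_union_left
      exact inter_card_ne_one h1 hW4 hU4 hW hU (by omega)
    · have := card_pos.2 ⟨s, mem_inter.2 ⟨hs.1, hsW⟩⟩
      have := hle W' subset_union_right
      exact inter_card_ne_one h1 hW4' hU4 hW' hU (by omega)
  exact ⟨_, by omega, hpc'⟩

theorem exists_isSpider (h1 : SevenThreeGraph G) (h2 : P4Connected G)
    (h7 : 7 ≤ Fintype.card V) : ∃ t L, IsSpider G t L ∧ L.card = 3 := by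
  obtain ⟨S, hc, hS⟩ := exists_pc_six h1 h2 h7
  have hproper : S ≠ univ := by
    rintro rfl
    rw [card_univ] at hc
    omega
  obtain ⟨W, hW4, hW, hne, hne'⟩ := exists_crossing h2 (card_pos.1 (by omega)) hproper
  refine exists_spider h1 hS hc hW4 hW ?_
  have c1 := card_pos.2 hne
  have c2 := card_pos.2 hne'
  have c3 := card_inter_add_card_sdiff W S
  have c4 : (W \ S).card ≠ 1 := by
    intro h
    obtain ⟨w, hw⟩ := card_eq_one.1 h
    have hw' : w ∈ W \ S := by simp [hw]
    refine not_one_outside h1 hS hc hW4 hW (mem_sdiff.1 hw').2 (mem_sdiff.1 hw').1 ?_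
    intro z hz
    by_cases hzS : z ∈ S
    · exact mem_insert_of_mem hzS
    · have : z ∈ W \ S := mem_sdiff.2 ⟨hz, hzS⟩
      rw [hw, mem_singleton] at this
      exact this ▸ mem_insert_self _ _
  have c5 : (W \ S).card ≠ 3 := by
    intro h
    have hcard : (S ∪ W).card = 9 := by
      rw [← union_sdiff_self_eq_union, card_union_of_disjoint disjoint_sdiff]; omega
    obtain ⟨s, hs⟩ := card_eq_one.1 (show (W ∩ S).card = 1 by omega)
    have hsm : s ∈ W ∩ S := by simp [hs]
    -- the vertex of `W` in `S` lies on a `P₄` inside `S`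
    obtain ⟨U, hUS, hU4, hU, ⟨u, hu⟩, -⟩ := hS {s} (by simpa using (mem_inter.1 hsm).2) (by simp)
      (by rw [← card_pos, card_sdiff_of_subset (by simpa using (mem_inter.1 hsm).2)]; simp; omega)
    obtain rfl : u = s := by simpa using (mem_inter.1 hu).2
    have := card_pos.2 ⟨u, mem_inter.2 ⟨(mem_inter.1 hsm).1, (mem_inter.1 hu).1⟩⟩
    have hle : (W ∩ U).card ≤ (W ∩ S).card := card_le_card (inter_subset_inter_left hUS)
    exact inter_card_ne_one h1 hU4 hW4 hU hW (by omega)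
  omega

/-- Few vertices of a spider lie in a subspider with three legs. -/
theorem exists_three_legs {L M : Finset (V × V)} (hc : 3 ≤ L.card) {T : Finset V}
    (hT : T ⊆ verts L) (hM : M ⊆ L) (hTM : T.card + M.card ≤ 3) :
    ∃ N ⊆ L, N.card = 3 ∧ M ⊆ N ∧ T ⊆ verts N := by
  classical
  have h : ∀ x ∈ T, ∃ p ∈ L, x = p.1 ∨ x = p.2 := fun x hx => mem_verts.1 (hT hx)
  choose! f hf hf' using h
  have hsub : T.image f ∪ M ⊆ L := by
    refine union_subset (fun p hp => ?_) hM
    obtain ⟨x, hx, rfl⟩ := mem_image.1 hp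
    exact hf x hx
  have hcard : (T.image f ∪ M).card ≤ 3 :=
    (card_union_le _ _).trans ((Nat.add_le_add_right card_image_le _).trans hTM)
  obtain ⟨N, hN1, hN2, hN3⟩ := exists_subsuperset_card_eq hsub hcard hc
  refine ⟨N, hN2, hN3, subset_union_right.trans hN1, fun x hx => mem_verts.2 ⟨f x, ?_, hf' x hx⟩⟩
  exact hN1 (mem_union_left _ (mem_image_of_mem _ hx))

theorem IsSpider.insert {t : Bool} {L : Finset (V × V)} (hL : IsSpider G t L) {n : V × V}
    (hn : Leg G t n) (hf : ∀ p ∈ L, Rel G t n p) : IsSpider G t (insert n L) := by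
  constructor
  · intro p hp
    rcases mem_insert.1 hp with rfl | hp
    exacts [hn, hL.1 p hp]
  · intro p hp q hq hpq
    rcases mem_insert.1 hp with rfl | hp' <;> rcases mem_insert.1 hq with rfl | hq'
    · exact absurd rfl hpq
    · exact hf q hq'
    · exact (hf p hp').symm
    · exact hL.2 p hp' q hq' hpq

theorem fits_exclusive {t : Bool} {x y : V} {p : V × V} (h : Fits G t (x, y) p)
    (h' : Fits G t (y, x) p) : False := by
  obtain ⟨-, -, a1, a2, a3, a4⟩ := h
  obtain ⟨-, -, b1, b2, b3, b4⟩ := h'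
  have := a4.1 b1.symm
  exact b2 (a3.2 this)

/-- A spider with at least three legs that does not exhaust the graph is contained in a larger
one. -/
theorem IsSpider.exists_larger (h1 : SevenThreeGraph G) (h2 : P4Connected G) {t : Bool}
    {L : Finset (V × V)} (hL : IsSpider G t L) (hc : 3 ≤ L.card) (hne : verts L ≠ univ) :
    ∃ L', IsSpider G t L' ∧ L.card < L'.card := by
  obtain ⟨W, hW4, hW, h3, h4⟩ := exists_crossing h2
    (card_pos.1 (by rw [hL.card_verts]; omega)) hne
  have c1 := card_pos.2 h3
  have c2 := card_pos.2 h4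
  have c3 := card_inter_add_card_sdiff W (verts L)
  have hsplit : ∀ z ∈ W, z ∈ W ∩ verts L ∨ z ∈ W \ verts L := by
    intro z hz
    by_cases z ∈ verts L <;> simp [*]
  have hcases : (W \ verts L).card = 1 ∨ (W \ verts L).card = 2 ∨ (W \ verts L).card = 3 := by
    omega
  rcases hcases with hcW | hcW | hcW
  · obtain ⟨w, hw⟩ := card_eq_one.1 hcW
    have hw' : w ∈ W \ verts L := by simp [hw]
    obtain ⟨N, hN, hN3, -, hTN⟩ := exists_three_legs hc (inter_subset_right (s₁ := W))
      (empty_subset L) (by simp; omega)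
    have hspN := hL.subset hN
    refine (not_one_outside h1 (hspN.pc_verts hN3) (by rw [hspN.card_verts, hN3]) hW4 hW (w := w)
      (fun h => (mem_sdiff.1 hw').2 ?_) (mem_sdiff.1 hw').1 ?_).elim
    · obtain ⟨p, hp, h⟩ := mem_verts.1 h
      exact mem_verts.2 ⟨p, hN hp, h⟩
    · intro z hz
      rcases hsplit z hz with h | h
      · exact mem_insert_of_mem (hTN h)
      · rw [hw, mem_singleton] at h
        exact h ▸ mem_insert_self _ _
  · obtain ⟨x, y, hxy, hxyW⟩ := card_eq_two.1 hcW
    have hx : x ∈ W \ verts L := by simp [hxyW]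
    have hy : y ∈ W \ verts L := by simp [hxyW]
    rw [mem_sdiff] at hx hy
    obtain ⟨s, hs⟩ := h3
    obtain ⟨i, hi, his⟩ := mem_verts.1 (mem_inter.1 hs).2
    -- the leg `i` of a vertex `s` of `W` decides which of `x`, `y` is the body
    have key : ∀ m ∈ L, (Fits G t (x, y) i ∧ Fits G t (x, y) m) ∨
        (Fits G t (y, x) i ∧ Fits G t (y, x) m) := by
      intro m hm
      have hT : (W ∩ verts L).erase s ⊆ verts L := (erase_subset _ _).trans inter_subset_right
      obtain ⟨N, hN, hN3, hMN, hTN⟩ := exists_three_legs hc hT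
        (insert_subset hi (singleton_subset_iff.2 hm)) (by
          rw [card_erase_of_mem hs]
          have : ({i, m} : Finset (V × V)).card ≤ 2 := card_le_two
          omega)
      have hsub : verts N ⊆ verts L := by
        intro z hz
        obtain ⟨p, hp, h⟩ := mem_verts.1 hz
        exact mem_verts.2 ⟨p, hN hp, h⟩
      have hiN : i ∈ N := hMN (by simp)
      have hmN : m ∈ N := hMN (by simp)
      refine (extend_three h1 (hL.subset hN) hN3 hxy (fun h => hx.2 (hsub h))
        (fun h => hy.2 (hsub h)) hW4 hW hx.1 hy.1 ?_).imp
        (fun h => ⟨h i hiN, h m hmN⟩) (fun h => ⟨h i hiN, h m hmN⟩)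
      intro z hz
      rw [mem_union]
      rcases hsplit z hz with h | h
      · left
        by_cases hzs : z = s
        · subst hzs
          exact mem_verts.2 ⟨i, hiN, his⟩
        · exact hTN (mem_erase.2 ⟨hzs, h⟩)
      · right
        rwa [hxyW] at h
    have fin : ∀ n : V × V, n.1 ∉ verts L → Leg G t n → (∀ p ∈ L, Rel G t n p) →
        ∃ L', IsSpider G t L' ∧ L.card < L'.card := by
      intro n hn hl hr
      refine ⟨_, hL.insert hl hr, ?_⟩
      rw [card_insert_of_notMem fun h => hn (mem_verts.2 ⟨n, h, Or.inl rfl⟩)]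
      omega
    rcases key i hi with ⟨h, -⟩ | ⟨h, -⟩
    · refine fin (x, y) hx.2 h.1 fun p hp => ?_
      rcases key p hp with h' | h'
      · exact h'.2.2
      · exact (fits_exclusive h h'.1).elim
    · refine fin (y, x) hy.2 h.1 fun p hp => ?_
      rcases key p hp with h' | h'
      · exact (fits_exclusive h'.1 h).elim
      · exact h'.2.2
  · exfalso
    obtain ⟨s, hs⟩ := h3
    obtain ⟨p, hp, hps⟩ := mem_verts.1 (mem_inter.1 hs).2
    obtain ⟨q, hq, hqp⟩ := exists_mem_ne (by omega : 1 < L.card) p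
    have lp := hL.1 p hp
    have lq := hL.1 q hq
    have rpq := hL.2 p hp q hq hqp.symm
    have hsub : ({p.1, p.2, q.1, q.2} : Finset V) ⊆ verts L := by
      intro z hz
      simp only [mem_insert, mem_singleton] at hz
      rcases hz with hz | hz | hz | hz
      exacts [mem_verts.2 ⟨p, hp, Or.inl hz⟩, mem_verts.2 ⟨p, hp, Or.inr hz⟩,
        mem_verts.2 ⟨q, hq, Or.inl hz⟩, mem_verts.2 ⟨q, hq, Or.inr hz⟩]
    have hle : (W ∩ {p.1, p.2, q.1, q.2}).card ≤ (W ∩ verts L).card :=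
      card_le_card (inter_subset_inter_left hsub)
    have hpos : 0 < (W ∩ {p.1, p.2, q.1, q.2}).card := card_pos.2 ⟨s, mem_inter.2
      ⟨(mem_inter.1 hs).1, by rcases hps with rfl | rfl <;> simp⟩⟩
    exact inter_card_ne_one h1 (card_legs lp lq rpq) hW4 (inducesP4_legs lp lq rpq) hW (by omega)

/-- A `p₄`-connected `(7,3)`-graph with at least seven vertices is a spider. -/
theorem exists_spanning_spider (h1 : SevenThreeGraph G) (h2 : P4Connected G)
    (h7 : 7 ≤ Fintype.card V) : ∃ t L, IsSpider G t L ∧ 3 ≤ L.card ∧ verts L = univ := by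
  classical
  obtain ⟨t, L, hL, hc⟩ := exists_isSpider h1 h2 h7
  obtain ⟨M, hM, hmax⟩ := exists_max_image (univ.filter fun L => IsSpider G t L) card
    ⟨L, by simpa using hL⟩
  have hM : IsSpider G t M := by simpa using hM
  have hc3 : 3 ≤ M.card := hc ▸ hmax L (by simpa using hL)
  refine ⟨t, M, hM, hc3, ?_⟩
  by_contra hne
  obtain ⟨L', hL', hlt⟩ := hM.exists_larger h1 h2 hc3 hne
  have := hmax L' (by simpa using hL')
  omega

end Structure

/-! ### An irrational Laplacian eigenvalue of a spider -/

open Finset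

section Eigenvalue

variable {V : Type*} [Fintype V] [DecidableEq V] {G : SimpleGraph V}

set_option linter.unusedSectionVars false

theorem lap_apply [DecidableRel G.Adj] (f : V → ℝ) (x : V) :
    (G.lapMatrix ℝ).mulVec f x = ∑ y, if G.Adj x y then f x - f y else 0 := by
  rw [SimpleGraph.lapMatrix_mulVec_apply, SimpleGraph.degree_eq_sum_if_adj,
    SimpleGraph.neighborFinset_eq_filter, sum_filter, sum_mul, ← sum_sub_distrib]
  refine sum_congr rfl fun y _ => ?_
  split_ifs <;> simp

theorem IsSpider.ne_cross {t : Bool} {L : Finset (V × V)} (h : IsSpider G t L) {p q : V × V}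
    (hp : p ∈ L) (hq : q ∈ L) : p.1 ≠ q.2 := by
  by_cases e : p = q
  · exact e ▸ (h.1 p hp).1
  · exact (h.2 p hp q hq e).1.2.2.1

theorem IsSpider.fst_eq {t : Bool} {L : Finset (V × V)} (h : IsSpider G t L) {p q : V × V}
    (hp : p ∈ L) (hq : q ∈ L) : p.1 = q.1 ↔ p = q := by
  refine ⟨fun e => ?_, fun e => e ▸ rfl⟩
  by_contra n
  exact (h.2 p hp q hq n).1.1 e

theorem IsSpider.snd_eq {t : Bool} {L : Finset (V × V)} (h : IsSpider G t L) {p q : V × V}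
    (hp : p ∈ L) (hq : q ∈ L) : p.2 = q.2 ↔ p = q := by
  refine ⟨fun e => ?_, fun e => e ▸ rfl⟩
  by_contra n
  exact (h.2 p hp q hq n).1.2.1 e

theorem IsSpider.sum_eq {t : Bool} {L : Finset (V × V)} (h : IsSpider G t L)
    (hL : verts L = univ) (g : V → ℝ) : ∑ y, g y = ∑ p ∈ L, (g p.1 + g p.2) := by
  rw [← hL, verts, sum_union, sum_image, sum_image, sum_add_distrib]
  · exact fun p hp q hq e => (h.snd_eq hp hq).1 e
  · exact fun p hp q hq e => (h.fst_eq hp hq).1 e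
  · rw [Finset.disjoint_left]
    intro x hx hy
    obtain ⟨p, hp, rfl⟩ := mem_image.1 hx
    obtain ⟨q, hq, e⟩ := mem_image.1 hy
    exact h.ne_cross hp hq e.symm

/-- The vector with entry `τ * c p` at the body and `c p` at the foot of each leg `p`. -/
noncomputable def legVec (L : Finset (V × V)) (τ : ℝ) (c : V × V → ℝ) (x : V) : ℝ :=
  ∑ q ∈ L, ((if q.1 = x then τ * c q else 0) + if q.2 = x then c q else 0)

theorem legVec_fst {t : Bool} {L : Finset (V × V)} (h : IsSpider G t L) (τ : ℝ) (c : V × V → ℝ)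
    {p : V × V} (hp : p ∈ L) : legVec L τ c p.1 = τ * c p := by
  have : ∀ q ∈ L, ((if q.1 = p.1 then τ * c q else 0) + if q.2 = p.1 then c q else 0)
      = if q = p then τ * c q else 0 := by
    intro q hq
    simp only [h.fst_eq hq hp, (h.ne_cross hp hq).symm, if_false, add_zero]
  rw [legVec, sum_congr rfl this, sum_ite_eq' L p, if_pos hp]

theorem legVec_snd {t : Bool} {L : Finset (V × V)} (h : IsSpider G t L) (τ : ℝ) (c : V × V → ℝ)
    {p : V × V} (hp : p ∈ L) : legVec L τ c p.2 = c p := by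
  have : ∀ q ∈ L, ((if q.1 = p.2 then τ * c q else 0) + if q.2 = p.2 then c q else 0)
      = if q = p then c q else 0 := by
    intro q hq
    simp only [h.snd_eq hq hp, h.ne_cross hq hp, if_false, zero_add]
  rw [legVec, sum_congr rfl this, sum_ite_eq' L p, if_pos hp]

/-- If the weights `c` sum to zero, the Laplacian multiplies `legVec L τ c` by `1 - τ` for a thin
spider and by `k - 1 + τ` for a thick one, provided `τ` solves the quadratic equation that makes
the body entries agree with the foot entries. -/
theorem lap_legVec [DecidableRel G.Adj] {t : Bool} {L : Finset (V × V)} (h : IsSpider G t L)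
    (hL : verts L = univ) {τ : ℝ} {c : V × V → ℝ} (hc : ∑ q ∈ L, c q = 0)
    (hτ : τ ^ 2 + (if t = true then (L.card : ℝ) else -L.card) * τ = 1) :
    (G.lapMatrix ℝ).mulVec (legVec L τ c)
      = (if t = true then 1 - τ else L.card - 1 + τ) • legVec L τ c := by
  have hS : ∀ a b : ℝ, ∑ q ∈ L, (a - b * c q) = L.card * a := by
    intro a b
    rw [sum_sub_distrib, ← mul_sum, hc]
    simp
  ext x
  rw [lap_apply, h.sum_eq hL, Pi.smul_apply, smul_eq_mul]
  obtain ⟨p, hp, hx⟩ := mem_verts.1 (hL ▸ mem_univ x : x ∈ verts L)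
  have hpt := (h.1 p hp).2
  -- Each sum below is a constant minus a multiple of `∑ c`, up to a correction at `q = p`.
  rcases hx with rfl | rfl <;> cases t <;> simp only [if_true, reduceCtorEq, if_false] at hτ ⊢
  · have : ∀ q ∈ L, ((if G.Adj p.1 q.1 then legVec L τ c p.1 - legVec L τ c q.1 else 0) +
        if G.Adj p.1 q.2 then legVec L τ c p.1 - legVec L τ c q.2 else 0)
        = (2 * τ * c p - (τ + 1) * c q) + if q = p then (c p - τ * c p) else 0 := by
      intro q hq
      rw [legVec_fst h τ c hp, legVec_fst h τ c hq, legVec_snd h τ c hq]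
      by_cases e : q = p
      · subst e
        simp only [SimpleGraph.irrefl, hpt, if_true, if_false, reduceCtorEq]
        ring
      · have := (h.2 p hp q hq (Ne.symm e)).2
        rw [if_pos this.1, if_pos (this.2.2.1.2 rfl), if_neg e]
        ring
    rw [sum_congr rfl this, sum_add_distrib, hS, sum_ite_eq' L p, if_pos hp, legVec_fst h τ c hp]
    linear_combination (-c p) * hτ
  · have : ∀ q ∈ L, ((if G.Adj p.1 q.1 then legVec L τ c p.1 - legVec L τ c q.1 else 0) +
        if G.Adj p.1 q.2 then legVec L τ c p.1 - legVec L τ c q.2 else 0)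
        = (τ * c p - τ * c q) + if q = p then (τ * c p - c p) else 0 := by
      intro q hq
      rw [legVec_fst h τ c hp, legVec_fst h τ c hq, legVec_snd h τ c hq]
      by_cases e : q = p
      · subst e
        simp only [SimpleGraph.irrefl, hpt, if_true, if_false]
        ring
      · have := (h.2 p hp q hq (Ne.symm e)).2
        rw [if_pos this.1, if_neg (fun n => by simpa using this.2.2.1.1 n), if_neg e]
    rw [sum_congr rfl this, sum_add_distrib, hS, sum_ite_eq' L p, if_pos hp, legVec_fst h τ c hp]
    linear_combination (c p) * hτ
  · have : ∀ q ∈ L, ((if G.Adj p.2 q.1 then legVec L τ c p.2 - legVec L τ c q.1 else 0) +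
        if G.Adj p.2 q.2 then legVec L τ c p.2 - legVec L τ c q.2 else 0)
        = (c p - τ * c q) + if q = p then (τ * c p - c p) else 0 := by
      intro q hq
      rw [legVec_snd h τ c hp, legVec_fst h τ c hq, legVec_snd h τ c hq]
      by_cases e : q = p
      · subst e
        simp only [SimpleGraph.irrefl, G.adj_comm q.2, hpt, if_true, if_false, reduceCtorEq]
        ring
      · have := (h.2 p hp q hq (Ne.symm e)).2
        rw [if_pos (this.2.2.2.2 rfl).symm, if_neg this.2.1, if_neg e]
    rw [sum_congr rfl this, sum_add_distrib, hS, sum_ite_eq' L p, if_pos hp, legVec_snd h τ c hp]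
    ring
  · have : ∀ q ∈ L, ((if G.Adj p.2 q.1 then legVec L τ c p.2 - legVec L τ c q.1 else 0) +
        if G.Adj p.2 q.2 then legVec L τ c p.2 - legVec L τ c q.2 else 0)
        = if q = p then (c p - τ * c p) else 0 := by
      intro q hq
      rw [legVec_snd h τ c hp, legVec_fst h τ c hq, legVec_snd h τ c hq]
      by_cases e : q = p
      · subst e
        simp only [SimpleGraph.irrefl, G.adj_comm q.2, hpt, if_true, if_false]
        ring
      · have := (h.2 p hp q hq (Ne.symm e)).2
        rw [if_neg (fun n => by simpa using this.2.2.2.1 n.symm), if_neg this.2.1, if_neg e]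
        ring
    rw [sum_congr rfl this, sum_ite_eq' L p, if_pos hp, legVec_snd h τ c hp]
    ring

theorem mem_spectrum_of_mulVec {A : Matrix V V ℝ} {μ : ℝ} {f : V → ℝ} (h : A.mulVec f = μ • f)
    (hf : f ≠ 0) : μ ∈ spectrum ℝ A := by
  rw [← Matrix.spectrum_toLin']
  exact (Module.End.hasEigenvalue_of_hasEigenvector
    (Module.End.hasEigenvector_iff.2
      ⟨Module.End.mem_eigenspace_iff.2 (by rw [Matrix.toLin'_apply, h]), hf⟩)).mem_spectrum

theorem spider_mem_spectrum [DecidableRel G.Adj] {t : Bool} {L : Finset (V × V)}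
    (h : IsSpider G t L) (hL : verts L = univ) (hk : 2 ≤ L.card) {τ : ℝ}
    (hτ : τ ^ 2 + (if t = true then (L.card : ℝ) else -L.card) * τ = 1) :
    (if t = true then 1 - τ else L.card - 1 + τ) ∈ spectrum ℝ (G.lapMatrix ℝ) := by
  obtain ⟨p, hp, q, hq, hpq⟩ := one_lt_card.1 hk
  refine mem_spectrum_of_mulVec (lap_legVec h hL
    (c := fun r => (if r = p then 1 else 0) - if r = q then 1 else 0) ?_ hτ) ?_
  · simp [sum_sub_distrib, hp, hq]
  · intro e
    have := congrFun e p.2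
    rw [legVec_snd h τ _ hp] at this
    simp [hpq] at this

/-- The roots of `x ^ 2 + b * x = 1` are not integers if `b ≠ 0`: an integral root would be a
unit, equal to its own inverse `x + b`. -/
theorem no_int_root {b z : ℤ} (hb : b ≠ 0) : z ^ 2 + b * z ≠ 1 := by
  intro h
  have h' : z * (z + b) = 1 := by linear_combination h
  rcases Int.mul_eq_one_iff_eq_one_or_neg_one.1 h' with ⟨h1, h2⟩ | ⟨h1, h2⟩ <;> omega

theorem spider_not_LIntegral [DecidableRel G.Adj] {t : Bool} {L : Finset (V × V)}
    (h : IsSpider G t L) (hL : verts L = univ) (hk : 2 ≤ L.card) : ¬ LIntegral G := by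
  intro hI
  have hroot : ∀ b : ℝ, ∃ τ : ℝ, τ ^ 2 + b * τ = 1 := fun b =>
    ⟨(-b + √(b ^ 2 + 4)) / 2, by
      have := Real.sq_sqrt (show 0 ≤ b ^ 2 + 4 by positivity)
      linear_combination this / 4⟩
  obtain ⟨τ, hτ⟩ := hroot (if t = true then (L.card : ℝ) else -L.card)
  obtain ⟨z, hz⟩ := hI _ (spider_mem_spectrum h hL hk hτ)
  cases t <;> simp only [if_true, reduceCtorEq, if_false] at hτ hz
  · refine no_int_root (b := -L.card) (z := z - L.card + 1) (by omega) ?_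
    have : τ = z - L.card + 1 := by linear_combination hz
    rw [this] at hτ
    exact_mod_cast hτ
  · refine no_int_root (b := L.card) (z := 1 - z) (by omega) ?_
    have : τ = 1 - z := by linear_combination -hz
    rw [this] at hτ
    exact_mod_cast hτ

end Eigenvalue

end SevenThree

/-- A `(7,3)`-graph that is `p₄`-connected and has at least `7` vertices is not
`L`-integral. -/
theorem sevenThree_p4Connected_not_LIntegral {V : Type*} [Fintype V] [DecidableEq V]
    (G : SimpleGraph V) [DecidableRel G.Adj] (h1 : SevenThreeGraph G)
    (h2 : P4Connected G) (h7 : 7 ≤ Fintype.card V) :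
    ¬ LIntegral G := by
  obtain ⟨t, L, hS, hk, hL⟩ := SevenThree.exists_spanning_spider h1 h2 h7
  exact SevenThree.spider_not_LIntegral hS hL (by omega)
end

section
/- Let G be a P4-extendible graph. Then G is L-integral if and only if G is a cograph. -/
/-!
Two reductions make the spectrum tractable. First, `L`-integrality is rephrased through
eigenfunctions of the operator `lap`, so that no subtypes and no decidability instances occur;
a subgraph induced on `M` is replaced by the graph `resG G M` on all vertices.
Secondly, `P₄`-extendibility is rephrased through ordered paths `a b c d`: a further vertex is
not an extension vertex exactly when it sees none, all, or the two midpoints of the path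
(`NonExt`).

*Cographs are `L`-integral.* By Seinsche's theorem (`split_or_coSplit`) a `P₄`-free graph with at
least two vertices is a disjoint union or a join of two smaller ones. Eigenfunctions with non-zero
eigenvalue sum to zero, and restricting them to a part gives either an eigenfunction of that part,
with eigenvalue shifted by an integer, or, for a join, the eigenvalue `|A| + |B|`.

*A `P₄` destroys `L`-integrality.* There are two sources of non-integral eigenvalues.

* `not_lapInt_of_antisymm`: an involution moving two pairs of vertices yields a plane of
  antisymmetric functions, whose eigenvalues solve `(x - α) * (x - γ) = 1` with integers `α`, `γ`.
  If `α ≠ γ` they are not integers. This settles a `P₄` without extension vertex, and extensions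
  to a path, a cycle or a house on five vertices.
* `not_lapInt_of_pendant`: integrality makes `L * L - L` positive semidefinite, and a pendant vertex
  whose neighbour is not universal in its component contradicts this.

In the remaining case the extension vertex is a twin of a vertex of the path. Let `R` consist of
the vertices that see exactly the midpoints. If the path, its twin and `R` do not form a module,
another `P₄` has no extension vertex at all. If they form a module, the path has an end that is
pendant in it, and `L`-integrality passes from a graph to its modules (`lapInt_resG_of_module`).
-/


open SimpleGraph Polynomial

/-- A graph is `P₄`-extendible if for every vertex subset `W` inducing a path `P₄`
there is at most one vertex `x ∉ W` that induces a `P₄` together with some three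
vertices of `W`. -/
def P4Extendible {V : Type*} [DecidableEq V] (G : SimpleGraph V) : Prop :=
  ∀ W : Finset V, InducesP4 G W →
    {x : V | x ∉ W ∧ ∃ T : Finset V, T ⊆ W ∧ T.card = 3 ∧
      InducesP4 G (insert x T)}.Subsingleton

/-- A cograph is a graph with no induced subgraph isomorphic to the path `P₄`. -/
def IsCograph {V : Type*} (G : SimpleGraph V) : Prop :=
  ∀ s : Set V, ¬ Nonempty (G.induce s ≃g SimpleGraph.pathGraph 4)

/-! ### The Laplacian as an operator on functions -/

open Classical in
/-- The Laplacian of `G` as an operator on real functions on the vertices. -/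
noncomputable def lap {V : Type*} [Fintype V] (G : SimpleGraph V) (f : V → ℝ) (v : V) : ℝ :=
  ∑ w, if G.Adj v w then f v - f w else 0

/-- `L`-integrality in terms of eigenfunctions of `lap`, free of decidability instances. -/
def LapInt {V : Type*} [Fintype V] (G : SimpleGraph V) : Prop :=
  ∀ (μ : ℝ) (f : V → ℝ), f ≠ 0 → (∀ v, lap G f v = μ * f v) → ∃ z : ℤ, μ = z

lemma lapMatrix_mulVec_eq_lap {V : Type*} [Fintype V] [DecidableEq V] (G : SimpleGraph V)
    [DecidableRel G.Adj] (f : V → ℝ) : (G.lapMatrix ℝ).mulVec f = lap G f := by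
  funext v
  have h : lap G f v = ∑ w ∈ G.neighborFinset v, (f v - f w) := by
    have h1 : G.neighborFinset v = Finset.univ.filter (fun w => G.Adj v w) := by ext; simp
    rw [h1, Finset.sum_filter]
    refine Finset.sum_congr rfl fun w _ => ?_
    congr
  rw [SimpleGraph.lapMatrix_mulVec_apply, h, Finset.sum_sub_distrib, Finset.sum_const,
    SimpleGraph.card_neighborFinset_eq_degree, nsmul_eq_mul]

lemma mem_spectrum_lapMatrix {V : Type*} [Fintype V] [DecidableEq V] (G : SimpleGraph V)
    [DecidableRel G.Adj] (μ : ℝ) :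
    μ ∈ spectrum ℝ (G.lapMatrix ℝ) ↔ ∃ f : V → ℝ, f ≠ 0 ∧ ∀ v, lap G f v = μ * f v := by
  rw [← Matrix.spectrum_toLin', ← Module.End.hasEigenvalue_iff_mem_spectrum]
  constructor
  · intro h
    obtain ⟨f, hf⟩ := h.exists_hasEigenvector
    refine ⟨f, hf.2, fun v => ?_⟩
    have := congrFun hf.apply_eq_smul v
    simpa [lapMatrix_mulVec_eq_lap] using this
  · rintro ⟨f, hf, h⟩
    refine Module.End.hasEigenvalue_of_hasEigenvector (x := f) ⟨?_, hf⟩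
    rw [Module.End.mem_eigenspace_iff]
    funext v
    simpa [lapMatrix_mulVec_eq_lap] using h v

lemma lIntegral_iff_lapInt {V : Type*} [Fintype V] [DecidableEq V] (G : SimpleGraph V)
    [DecidableRel G.Adj] : LIntegral G ↔ LapInt G := by
  simp only [LIntegral, LapInt, mem_spectrum_lapMatrix]
  exact ⟨fun h μ f hf hv => h μ ⟨f, hf, hv⟩, fun h μ ⟨f, hf, hv⟩ => h μ f hf hv⟩

/-- No integer lies strictly between `0` and `1`, so `L * L - L` is positive semidefinite
when the spectrum of `L` is integral. -/
lemma posSemidef_sq_sub {n : Type*} [Fintype n] [DecidableEq n] (A : Matrix n n ℝ)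
    (hA : A.IsHermitian) (h : ∀ μ ∈ spectrum ℝ A, ∃ z : ℤ, μ = z) :
    (A * A - A).PosSemidef := by
  set D : Matrix n n ℝ := Matrix.diagonal (RCLike.ofReal ∘ hA.eigenvalues) with hD
  have h1 : A * A - A = (hA.eigenvectorUnitary : Matrix n n ℝ) * (D * D - D) *
      (hA.eigenvectorUnitary : Matrix n n ℝ).conjTranspose := by
    have h2 : A = Unitary.conjStarAlgAut ℝ _ hA.eigenvectorUnitary D := hA.spectral_theorem
    have h3 : A * A - A = Unitary.conjStarAlgAut ℝ _ hA.eigenvectorUnitary (D * D - D) := by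
      rw [map_sub, map_mul, ← h2]
    rw [h3, Unitary.conjStarAlgAut_apply]
    rfl
  rw [h1]
  apply Matrix.PosSemidef.mul_mul_conjTranspose_same
  rw [hD, Matrix.diagonal_mul_diagonal, Matrix.diagonal_sub, Matrix.posSemidef_diagonal_iff]
  intro i
  obtain ⟨z, hz⟩ := h _ (hA.eigenvalues_mem_spectrum_real i)
  simp only [Function.comp_apply, hz, RCLike.ofReal_real_eq_id, id]
  have : (0 : ℤ) ≤ z * z - z := by
    rcases le_or_gt z 0 with h | h <;> nlinarith
  exact_mod_cast this

/-- If the Laplacian spectrum is integral, a function on which the quadratic form of `L * L - L`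
vanishes is annihilated by `L * L - L`. -/
lemma lap_lap_eq_of_quadratic {V : Type*} [Fintype V] (G : SimpleGraph V) (hG : LapInt G)
    (f : V → ℝ) (h : ∀ v, f v * lap G f v = lap G f v * lap G f v) :
    lap G (lap G f) = lap G f := by
  classical
  have hP := posSemidef_sq_sub (G.lapMatrix ℝ) (SimpleGraph.isHermitian_lapMatrix ℝ G)
    ((lIntegral_iff_lapInt G).2 hG)
  have key : (G.lapMatrix ℝ * G.lapMatrix ℝ - G.lapMatrix ℝ).mulVec f
      = lap G (lap G f) - lap G f := by
    rw [Matrix.sub_mulVec, ← Matrix.mulVec_mulVec, lapMatrix_mulVec_eq_lap, lapMatrix_mulVec_eq_lap]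
  have h0 : dotProduct (star f) ((G.lapMatrix ℝ * G.lapMatrix ℝ - G.lapMatrix ℝ).mulVec f) = 0 := by
    rw [Matrix.sub_mulVec, ← Matrix.mulVec_mulVec, dotProduct_sub, star_trivial,
      Matrix.dotProduct_mulVec, ← Matrix.mulVec_transpose,
      (SimpleGraph.isSymm_lapMatrix (R := ℝ) G).eq, lapMatrix_mulVec_eq_lap]
    simp only [dotProduct, h, sub_self]
  rw [hP.dotProduct_mulVec_zero_iff, key] at h0
  exact sub_eq_zero.1 h0

/-! ### Antisymmetric eigenfunctions -/

open Classical in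
/-- The degree of a vertex as a real number, free of decidability instances. -/
noncomputable def dg {V : Type*} [Fintype V] (G : SimpleGraph V) (v : V) : ℝ :=
  ∑ w, if G.Adj v w then 1 else 0

open Classical in
lemma lap_eq {V : Type*} [Fintype V] (G : SimpleGraph V) (f : V → ℝ) (v : V) :
    lap G f v = dg G v * f v - ∑ w, if G.Adj v w then f w else 0 := by
  rw [lap, dg, Finset.sum_mul, ← Finset.sum_sub_distrib]
  refine Finset.sum_congr rfl fun w _ => ?_
  split_ifs <;> simp

lemma dg_int {V : Type*} [Fintype V] (G : SimpleGraph V) (v : V) : ∃ z : ℤ, dg G v = z := by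
  classical
  refine ⟨∑ w, if G.Adj v w then 1 else 0, ?_⟩
  simp [dg]

open Classical in
lemma dg_sub_le {V : Type*} [Fintype V] (G : SimpleGraph V) (H : Finset V) (u v : V)
    (h : ∀ y ∉ H, G.Adj u y → G.Adj v y) :
    ∑ y ∈ H, ((if G.Adj v y then (1 : ℝ) else 0) - (if G.Adj u y then 1 else 0)) ≤
      dg G v - dg G u := by
  rw [dg, dg, ← Finset.sum_sub_distrib, ← Finset.sum_add_sum_compl H]
  apply le_add_of_nonneg_right
  refine Finset.sum_nonneg fun y hy => ?_
  have := h y (by simpa using hy)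
  split_ifs <;> simp_all

open Classical in
lemma dg_sub_eq {V : Type*} [Fintype V] (G : SimpleGraph V) (H : Finset V) (u v : V)
    (h : ∀ y ∉ H, (G.Adj u y ↔ G.Adj v y)) :
    dg G v - dg G u =
    ∑ y ∈ H, ((if G.Adj v y then (1 : ℝ) else 0) - (if G.Adj u y then 1 else 0)) := by
  rw [dg, dg, ← Finset.sum_sub_distrib, ← Finset.sum_add_sum_compl H, add_eq_left]
  refine Finset.sum_eq_zero fun y hy => ?_
  have := h y (by simpa using hy)
  simp [this]

open Classical in
lemma sum_adj_four {V : Type*} [Fintype V] (G : SimpleGraph V) (u u' v v' : V) (p q : ℝ) (z : V) :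
    (∑ w, if G.Adj z w then ((if w = u then p else 0) - (if w = u' then p else 0)
      + (if w = v then q else 0) - (if w = v' then q else 0)) else 0) =
    (if G.Adj z u then p else 0) - (if G.Adj z u' then p else 0)
      + (if G.Adj z v then q else 0) - (if G.Adj z v' then q else 0) := by
  have h : ∀ (t : V) (r : ℝ), (∑ w, if G.Adj z w then (if w = t then r else 0) else 0) =
      if G.Adj z t then r else 0 := by
    intro t r
    rw [Finset.sum_eq_single t] <;> simp +contextual
  rw [← h u, ← h u', ← h v, ← h v', ← Finset.sum_sub_distrib, ← Finset.sum_add_distrib,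
    ← Finset.sum_sub_distrib]
  refine Finset.sum_congr rfl fun w _ => ?_
  by_cases hw : G.Adj z w <;> simp [hw]

open Classical in
/-- Suppose exchanging `u` with `u'` and `v` with `v'` is a symmetry of `G`. The functions that are
antisymmetric under it and vanish elsewhere form a plane on which the Laplacian acts by a matrix
with diagonal `α`, `γ` and off-diagonal entries `-1`. Its eigenvalues are the roots of
`(x - α) * (x - γ) = 1`, which are integers only for `α = γ`. -/
lemma not_lapInt_of_antisymm {V : Type*} [Fintype V] (G : SimpleGraph V) (u u' v v' : V)
    (huv : G.Adj u v) (huv' : G.Adj u' v') (h1 : ¬ G.Adj u v') (h2 : ¬ G.Adj u' v)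
    (hu : u ≠ u') (hv : v ≠ v') (h3 : u ≠ v') (h4 : u' ≠ v)
    (hout : ∀ y, y ≠ u → y ≠ u' → y ≠ v → y ≠ v' →
      ((G.Adj y u ↔ G.Adj y u') ∧ (G.Adj y v ↔ G.Adj y v')))
    (hne : dg G u + (if G.Adj u u' then 1 else 0) ≠ dg G v + (if G.Adj v v' then 1 else 0)) :
    ¬ LapInt G := by
  intro hL
  have huv1 : u ≠ v := huv.ne
  have huv2 : u' ≠ v' := huv'.ne
  have e1 : dg G u' = dg G u := by
    have := dg_sub_eq G {u, u', v, v'} u u' (by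
      intro y hy
      simp only [Finset.mem_insert, Finset.mem_singleton, not_or] at hy
      simpa [G.adj_comm] using (hout y hy.1 hy.2.1 hy.2.2.1 hy.2.2.2).1)
    rw [Finset.sum_insert (by simp; tauto), Finset.sum_insert (by simp; tauto),
      Finset.sum_insert (by simp; tauto), Finset.sum_singleton] at this
    simp only [huv, huv', h1, h2, G.adj_comm u' u, G.loopless.irrefl, if_true, if_false] at this
    linarith
  have e2 : dg G v' = dg G v := by
    have := dg_sub_eq G {u, u', v, v'} v v' (by
      intro y hy
      simp only [Finset.mem_insert, Finset.mem_singleton, not_or] at hy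
      simpa [G.adj_comm] using (hout y hy.1 hy.2.1 hy.2.2.1 hy.2.2.2).2)
    rw [Finset.sum_insert (by simp; tauto), Finset.sum_insert (by simp; tauto),
      Finset.sum_insert (by simp; tauto), Finset.sum_singleton] at this
    simp only [huv, huv', h1, h2, G.adj_comm v u, G.adj_comm v' u', G.adj_comm v u',
      G.adj_comm v' u, G.adj_comm v' v, G.loopless.irrefl, if_true, if_false] at this
    linarith
  obtain ⟨α, hα⟩ : ∃ α : ℤ, dg G u + (if G.Adj u u' then 1 else 0) = α := by
    obtain ⟨z, hz⟩ := dg_int G u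
    exact ⟨z + if G.Adj u u' then 1 else 0, by simp [hz]⟩
  obtain ⟨γ, hγ⟩ : ∃ γ : ℤ, dg G v + (if G.Adj v v' then 1 else 0) = γ := by
    obtain ⟨z, hz⟩ := dg_int G v
    exact ⟨z + if G.Adj v v' then 1 else 0, by simp [hz]⟩
  rw [hα, hγ] at hne
  obtain ⟨x, hx⟩ : ∃ x : ℝ, (x - α) * (x - γ) = 1 := by
    refine ⟨(α + γ + √((α - γ) ^ 2 + 4)) / 2, ?_⟩
    have := Real.sq_sqrt (show (0 : ℝ) ≤ ((α : ℝ) - γ) ^ 2 + 4 by positivity)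
    linear_combination this / 4
  set f : V → ℝ := fun w => (if w = u then 1 else 0) - (if w = u' then 1 else 0)
      + (if w = v then (α - x) else 0) - (if w = v' then (α - x) else 0) with hf
  have hfu : f u = 1 := by simp [hf, hu, huv1, h3]
  have hfu' : f u' = -1 := by simp [hf, hu.symm, huv2, h4]
  have hfv : f v = α - x := by simp [hf, huv1.symm, hv, h4.symm]
  have hfv' : f v' = -(α - x) := by simp [hf, huv2.symm, hv.symm, h3.symm]
  obtain ⟨z, hz⟩ := hL x f (fun h => by simp [h] at hfu) (by
    intro y
    rw [lap_eq, hf, sum_adj_four, ← hf]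
    by_cases y1 : y = u
    · subst y1
      rw [hfu]
      simp only [huv, h1, G.loopless.irrefl, if_true, if_false]
      linear_combination hα
    by_cases y2 : y = u'
    · subst y2
      rw [hfu', e1]
      simp only [huv', h2, G.loopless.irrefl, G.adj_comm y u, if_true, if_false]
      linear_combination -hα
    by_cases y3 : y = v
    · subst y3
      rw [hfv]
      simp only [huv, h2, G.adj_comm y u, G.adj_comm y u', G.loopless.irrefl, if_true, if_false]
      have : (if G.Adj y v' then (α - x) else 0) = (α - x) * (if G.Adj y v' then 1 else 0) := by
        split_ifs <;> simp
      rw [this]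
      linear_combination (α - x) * hγ + hx
    by_cases y4 : y = v'
    · subst y4
      rw [hfv', e2]
      simp only [huv', h1, G.adj_comm y u, G.adj_comm y u', G.adj_comm y v, G.loopless.irrefl,
        if_true, if_false]
      have : (if G.Adj v y then (α - x) else 0) = (α - x) * (if G.Adj v y then 1 else 0) := by
        split_ifs <;> simp
      rw [this]
      linear_combination -(α - x) * hγ - hx
    obtain ⟨g1, g2⟩ := hout y y1 y2 y3 y4
    simp [hf, y1, y2, y3, y4, g1, g2])
  rw [hz] at hx
  have hx' : (z - α) * (z - γ) = 1 := by exact_mod_cast hx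
  apply hne
  rcases Int.mul_eq_one_iff_eq_one_or_neg_one.1 hx' with h | h
  all_goals exact_mod_cast (by omega : α = γ)

/-! ### Pendant vertices -/

/-- If `d` has `c` as its only neighbour and `a` is at distance two from `c`, then `G` is not
`L`-integral. (If `G` is connected, `c` is a cut vertex that is not universal, and the algebraic
connectivity lies strictly between `0` and `1`.) -/
lemma not_lapInt_of_pendant {V : Type*} [Fintype V] (G : SimpleGraph V) (a b c d : V)
    (hd : ∀ y, G.Adj d y ↔ y = c) (hac : ¬ G.Adj a c) (hne : a ≠ c)
    (hab : G.Adj a b) (hbc : G.Adj b c) : ¬ LapInt G := by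
  classical
  intro hL
  have hdc : d ≠ c := ((hd c).2 rfl).ne
  have had : a ≠ d := by
    rintro rfl
    exact hac ((hd c).2 rfl)
  have hd' : ∀ y, G.Adj y d ↔ y = c := fun y => by rw [G.adj_comm, hd]
  -- The potential that is constant on `G - c - d`, zero at `c` and balanced at `c`.
  set f : V → ℝ := fun w => if w = c then 0 else if w = d then dg G c - 1 else -1 with hf
  have hg : lap G f = fun w => if w = d then dg G c - 1 else if G.Adj w c then -1 else 0 := by
    funext w
    by_cases hwc : w = c
    · subst hwc
      have : ∀ y, (if G.Adj w y then f w - f y else 0) =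
          (if G.Adj w y then 1 else 0) - (if y = d then dg G w else 0) := by
        intro y
        by_cases hy : y = d
        · subst hy
          simp [hf, hd', hdc]
        · by_cases hy2 : G.Adj w y
          · simp [hf, hy, hy2, hy2.ne.symm]
          · simp [hy, hy2]
      simp only [lap, this, Finset.sum_sub_distrib]
      simp [dg, hdc.symm]
    by_cases hwd : w = d
    · subst hwd
      simp [lap, hd, hf, hdc]
    · have : ∀ y, (if G.Adj w y then f w - f y else 0) =
          (if y = c then (if G.Adj w c then -1 else 0) else 0) := by
        intro y
        by_cases hy : y = c
        · subst hy
          simp [hf, hwc, hwd]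
        · have : G.Adj w y → y ≠ d := by
            rintro h rfl
            exact hwc ((hd' _).1 h)
          by_cases hy2 : G.Adj w y
          · simp [hf, hwc, hwd, hy, this hy2]
          · simp [hy, hy2]
      simp only [lap, this]
      simp [hwd]
  have hq := lap_lap_eq_of_quadratic G hL f (by
    intro v
    rw [hg]
    by_cases hvc : v = c
    · subst hvc
      simp [hf, hdc.symm]
    · by_cases hvd : v = d
      · simp [hf, hvd, hdc]
      · by_cases hv : G.Adj v c <;> simp [hf, hvc, hvd, hv])
  have ha := congrFun hq a
  rw [hg] at ha
  simp only [had, if_false, hac] at ha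
  have hpos : 0 < lap G (fun w => if w = d then dg G c - 1 else if G.Adj w c then -1 else 0) a := by
    unfold lap
    refine Finset.sum_pos' (fun y _ => ?_) ⟨b, Finset.mem_univ _, ?_⟩
    · by_cases hy : G.Adj a y
      · have : y ≠ d := by
          rintro rfl
          exact hne ((hd' _).1 hy)
        simp only [hy, had, hac, this, if_true, if_false]
        split_ifs <;> norm_num
      · simp [hy]
    · have : b ≠ d := by
        rintro rfl
        exact hne ((hd' _).1 hab)
      simp [hab, had, hac, this, hbc]
  exact absurd ha (ne_of_gt hpos)

/-! ### Modules, disjoint unions and joins -/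

/-- The graph on all of `V` whose edges are the edges of `G` inside `M`. -/
def resG {V : Type*} (G : SimpleGraph V) (M : Finset V) : SimpleGraph V where
  Adj v w := v ∈ M ∧ w ∈ M ∧ G.Adj v w
  symm := ⟨fun _ _ h => ⟨h.2.1, h.1, h.2.2.symm⟩⟩
  loopless := ⟨fun _ h => G.loopless.irrefl _ h.2.2⟩

lemma sum_lap {V : Type*} [Fintype V] (G : SimpleGraph V) (f : V → ℝ) : ∑ v, lap G f v = 0 := by
  classical
  have h : ∑ v, lap G f v = - ∑ v, lap G f v := by
    conv_lhs => unfold lap; rw [Finset.sum_comm]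
    rw [← Finset.sum_neg_distrib]
    refine Finset.sum_congr rfl fun v _ => ?_
    rw [lap, ← Finset.sum_neg_distrib]
    refine Finset.sum_congr rfl fun w _ => ?_
    rw [G.adj_comm]
    split_ifs <;> simp
  linarith

lemma lap_resG_of_notMem {V : Type*} [Fintype V] (G : SimpleGraph V) (M : Finset V) (f : V → ℝ)
    (v : V) (hv : v ∉ M) : lap (resG G M) f v = 0 := by
  simp [lap, resG, hv]

open Classical in
lemma lap_resG_of_mem {V : Type*} [Fintype V] (G : SimpleGraph V) (M : Finset V) (f : V → ℝ)
    (v : V) (hv : v ∈ M) :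
    lap (resG G M) f v = ∑ w ∈ M, if G.Adj v w then f v - f w else 0 := by
  rw [lap, ← Finset.sum_subset (Finset.subset_univ M)]
  · refine Finset.sum_congr rfl fun w hw => ?_
    simp [resG, hv, hw]
  · intro w _ hw
    simp [resG, hw]

lemma eq_zero_of_notMem {V : Type*} [Fintype V] {G : SimpleGraph V} {M : Finset V} {f : V → ℝ}
    {μ : ℝ} (hμ : μ ≠ 0) (h : ∀ v, lap (resG G M) f v = μ * f v) (v : V) (hv : v ∉ M) :
    f v = 0 := by
  have := h v
  rw [lap_resG_of_notMem G M f v hv] at this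
  simpa [hμ] using this.symm

lemma sum_eq_zero_of_eigen {V : Type*} [Fintype V] {G : SimpleGraph V} {f : V → ℝ}
    {μ : ℝ} (hμ : μ ≠ 0) (h : ∀ v, lap G f v = μ * f v) : ∑ v, f v = 0 := by
  have := sum_lap G f
  simp only [h, ← Finset.mul_sum] at this
  simpa [hμ] using this

/-- `L`-integrality passes to modules: an eigenfunction of the module with non-zero eigenvalue `μ`
has sum zero, so it is an eigenfunction of `G` for `μ + s`, where `s` counts the vertices outside
`M` that are adjacent to all of `M`. -/
lemma lapInt_resG_of_module {V : Type*} [Fintype V] (G : SimpleGraph V) (M : Finset V)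
    (hM : ∀ y ∉ M, (∀ z ∈ M, G.Adj y z) ∨ (∀ z ∈ M, ¬ G.Adj y z)) (hG : LapInt G) :
    LapInt (resG G M) := by
  classical
  intro μ f hf h
  by_cases hμ : μ = 0
  · exact ⟨0, by simp [hμ]⟩
  have hz := eq_zero_of_notMem hμ h
  have hs := sum_eq_zero_of_eigen hμ h
  obtain ⟨z, hz'⟩ := hG (μ + ((Mᶜ.filter fun y => ∀ z ∈ M, G.Adj y z).card : ℝ)) f hf (by
    intro v
    rw [lap, ← Finset.sum_add_sum_compl M]
    by_cases hv : v ∈ M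
    · rw [← lap_resG_of_mem G M f v hv, h, add_mul, Finset.card_filter]
      push_cast
      rw [Finset.sum_mul]
      congr 1
      refine Finset.sum_congr rfl fun y hy => ?_
      have hyM : y ∉ M := by simpa using hy
      rw [hz y hyM]
      rcases hM y hyM with hy1 | hy1
      · simp [(hy1 v hv).symm, if_pos hy1]
      · have h1 : ¬ G.Adj v y := fun h => hy1 v hv h.symm
        have h2 : ¬ ∀ z ∈ M, G.Adj y z := fun h => hy1 v hv (h v hv)
        simp [h1, if_neg h2]
    · rw [hz v hv, mul_zero]
      have e1 : ∑ y ∈ Mᶜ, (if G.Adj v y then 0 - f y else 0) = 0 := by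
        refine Finset.sum_eq_zero fun y hy => ?_
        simp [hz y (by simpa using hy)]
      rw [e1, add_zero]
      rcases hM v hv with hv1 | hv1
      · rw [Finset.sum_congr rfl fun y hy => if_pos (hv1 y hy)]
        have : ∑ y ∈ M, f y = 0 := by
          rw [← hs]
          exact Finset.sum_subset (Finset.subset_univ M) fun y _ hy => hz y hy
        simp [this]
      · exact Finset.sum_eq_zero fun y hy => if_neg (hv1 y hy))
  exact ⟨z - (Mᶜ.filter fun y => ∀ z ∈ M, G.Adj y z).card, by push_cast; linarith⟩

/-- An eigenvalue of a disjoint union whose eigenfunction does not vanish on the part `A` is an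
eigenvalue of `A`. -/
lemma int_of_disjoint_aux {V : Type*} [Fintype V] [DecidableEq V] (G : SimpleGraph V)
    (A B : Finset V) (hno : ∀ a ∈ A, ∀ b ∈ B, ¬ G.Adj a b) (hA : LapInt (resG G A))
    (μ : ℝ) (f : V → ℝ) (h : ∀ v, lap (resG G (A ∪ B)) f v = μ * f v)
    (v₀ : V) (hv₀ : v₀ ∈ A) (hf : f v₀ ≠ 0) : ∃ z : ℤ, μ = z := by
  classical
  refine hA μ (fun v => if v ∈ A then f v else 0) (fun h => hf ?_) fun v => ?_
  · simpa [hv₀] using congrFun h v₀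
  by_cases hv : v ∈ A
  · simp only [hv, if_true]
    rw [← h v, lap_resG_of_mem _ _ _ _ hv, lap_resG_of_mem _ _ _ _ (Finset.mem_union_left B hv)]
    rw [← Finset.sum_subset (Finset.subset_union_left (s₁ := A) (s₂ := B))]
    · refine Finset.sum_congr rfl fun w hw => ?_
      simp [hv, hw]
    · intro w hw hwA
      have hwB : w ∈ B := by simpa [hwA] using hw
      simp [hno v hv w hwB]
  · rw [lap_resG_of_notMem _ _ _ _ hv]
    simp [hv]

/-- An eigenvalue `μ` of a join whose eigenfunction does not vanish on the part `A` is `|A| + |B|`,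
or else `μ - |B|` is an eigenvalue of `A`. -/
lemma int_of_join_aux {V : Type*} [Fintype V] [DecidableEq V] (G : SimpleGraph V)
    (A B : Finset V) (hAB : Disjoint A B) (hall : ∀ a ∈ A, ∀ b ∈ B, G.Adj a b)
    (hA : LapInt (resG G A))
    (μ : ℝ) (hμ : μ ≠ 0) (f : V → ℝ) (h : ∀ v, lap (resG G (A ∪ B)) f v = μ * f v)
    (v₀ : V) (hv₀ : v₀ ∈ A) (hf : f v₀ ≠ 0) : ∃ z : ℤ, μ = z := by
  classical
  have hz := eq_zero_of_notMem hμ h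
  have hs : ∑ v ∈ A, f v + ∑ v ∈ B, f v = 0 := by
    rw [← Finset.sum_union hAB, ← sum_eq_zero_of_eigen hμ h]
    exact Finset.sum_subset (Finset.subset_univ _) fun y _ hy => hz y hy
  set fA : V → ℝ := fun v => if v ∈ A then f v else 0 with hfA
  have key : ∀ v ∈ A, lap (resG G A) fA v = (μ - B.card) * f v + ∑ w ∈ B, f w := by
    intro v hv
    have e := h v
    rw [lap_resG_of_mem _ _ _ _ (Finset.mem_union_left B hv), Finset.sum_union hAB,
      Finset.sum_congr rfl fun y hy => if_pos (hall v hv y hy), Finset.sum_sub_distrib,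
      Finset.sum_const, nsmul_eq_mul] at e
    have e2 : lap (resG G A) fA v = ∑ w ∈ A, if G.Adj v w then f v - f w else 0 := by
      rw [lap_resG_of_mem _ _ _ _ hv]
      refine Finset.sum_congr rfl fun w hw => ?_
      simp [hfA, hv, hw]
    linarith
  have hsum : (A.card + B.card - μ) * ∑ v ∈ A, f v = 0 := by
    have e := sum_lap (resG G A) fA
    rw [← Finset.sum_subset (Finset.subset_univ A)
      (fun y _ hy => lap_resG_of_notMem _ _ _ _ hy), Finset.sum_congr rfl key,
      Finset.sum_add_distrib, ← Finset.mul_sum, Finset.sum_const, nsmul_eq_mul] at e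
    linear_combination A.card * hs - e
  rcases mul_eq_zero.1 hsum with h1 | h1
  · exact ⟨A.card + B.card, by push_cast; linarith⟩
  · obtain ⟨z, hz'⟩ := hA (μ - B.card) fA (fun h => hf (by simpa [hfA, hv₀] using congrFun h v₀))
      (fun v => by
        by_cases hv : v ∈ A
        · rw [key v hv]
          have : fA v = f v := by simp [hfA, hv]
          rw [this]
          linarith
        · rw [lap_resG_of_notMem _ _ _ _ hv]
          simp [hfA, hv])
    exact ⟨z + B.card, by push_cast; linarith⟩

/-! ### Cographs are `L`-integral -/

/-- `a`, `b`, `c`, `d` are, in this order, the vertices of an induced path. -/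
def IsP4 {V : Type*} (G : SimpleGraph V) (a b c d : V) : Prop :=
  G.Adj a b ∧ G.Adj b c ∧ G.Adj c d ∧ ¬ G.Adj a c ∧ ¬ G.Adj a d ∧ ¬ G.Adj b d

/-- `M` splits into two non-empty parts without edges of `G` between them. -/
def Split {V : Type*} [DecidableEq V] (G : SimpleGraph V) (M : Finset V) : Prop :=
  ∃ A B : Finset V, A.Nonempty ∧ B.Nonempty ∧ Disjoint A B ∧ A ∪ B = M ∧
    ∀ a ∈ A, ∀ b ∈ B, ¬ G.Adj a b

/-- `M` splits into two non-empty parts with all edges of `G` between them. -/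
def CoSplit {V : Type*} [DecidableEq V] (G : SimpleGraph V) (M : Finset V) : Prop :=
  ∃ A B : Finset V, A.Nonempty ∧ B.Nonempty ∧ Disjoint A B ∧ A ∪ B = M ∧
    ∀ a ∈ A, ∀ b ∈ B, G.Adj a b

lemma split_compl {V : Type*} [DecidableEq V] (G : SimpleGraph V) (M : Finset V) :
    Split Gᶜ M ↔ CoSplit G M := by
  unfold Split CoSplit
  refine exists_congr fun A => exists_congr fun B => and_congr_right fun _ => and_congr_right
    fun _ => and_congr_right fun hd => and_congr_right fun _ => ?_
  refine forall₂_congr fun a ha => forall₂_congr fun b hb => ?_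
  have : a ≠ b := by
    rintro rfl
    exact Finset.disjoint_left.1 hd ha hb
  simp [this]

lemma coSplit_compl {V : Type*} [DecidableEq V] (G : SimpleGraph V) (M : Finset V) :
    CoSplit Gᶜ M ↔ Split G M := by
  rw [← split_compl, compl_compl]

lemma isP4_compl {V : Type*} {G : SimpleGraph V} {a b c d : V} (h : IsP4 Gᶜ a b c d) :
    IsP4 G b d a c := by
  simp only [IsP4, SimpleGraph.compl_adj] at *
  have := G.adj_comm
  grind

/-- If `A ∪ B` is disconnected and the new vertex `v` has a non-neighbour in `A`, then
`P₄`-freeness keeps `A ∪ B ∪ {v}` disconnected. -/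
lemma split_insert_aux {V : Type*} [DecidableEq V] (G : SimpleGraph V)
    (hP : ∀ a b c d, ¬ IsP4 G a b c d) (A B : Finset V) (hB : B.Nonempty)
    (hd : Disjoint A B) (hno : ∀ a ∈ A, ∀ b ∈ B, ¬ G.Adj a b) (v : V) (hv : v ∉ A ∪ B)
    (x : V) (hx : x ∈ A) (hvx : ¬ G.Adj v x) : Split G (insert v (A ∪ B)) := by
  classical
  simp only [Finset.mem_union, not_or] at hv
  have hd' := Finset.disjoint_left.1 hd
  by_cases h1 : ∃ z ∈ B, G.Adj v z
  · obtain ⟨z, hz, hvz⟩ := h1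
    -- The non-neighbours of `v` in `A` are separated from the rest: otherwise an edge from
    -- such a vertex to a neighbour of `v` in `A` extends through `v` to a path ending in `z`.
    refine ⟨A.filter (fun y => ¬ G.Adj v y), insert v (A.filter (fun y => G.Adj v y) ∪ B),
      ⟨x, by simp [hx, hvx]⟩, ⟨v, by simp⟩, ?_, ?_, ?_⟩
    · rw [Finset.disjoint_left]
      grind
    · ext y
      grind
    · intro p hp q hq hpq
      have h3 : IsP4 G p q v z → False := hP p q v z
      have := G.adj_comm
      unfold IsP4 at h3
      grind
  · push Not at h1
    refine ⟨insert v A, B, ⟨v, by simp⟩, hB, ?_, by rw [Finset.insert_union], ?_⟩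
    · rw [Finset.disjoint_left]
      grind
    · grind

lemma split_insert {V : Type*} [DecidableEq V] (G : SimpleGraph V)
    (hP : ∀ a b c d, ¬ IsP4 G a b c d) (M : Finset V) (hM : Split G M) (v : V) (hv : v ∉ M) :
    Split G (insert v M) ∨ CoSplit G (insert v M) := by
  obtain ⟨A, B, hA, hB, hd, rfl, hno⟩ := hM
  by_cases h : ∃ x ∈ A ∪ B, ¬ G.Adj v x
  · obtain ⟨x, hx, hvx⟩ := h
    left
    rcases Finset.mem_union.1 hx with hx | hx
    · exact split_insert_aux G hP A B hB hd hno v hv x hx hvx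
    · rw [Finset.union_comm] at hv ⊢
      exact split_insert_aux G hP B A hA hd.symm (fun b hb a ha h => hno a ha b hb h.symm)
        v hv x hx hvx
  · push Not at h
    refine .inr ⟨{v}, A ∪ B, by simp, hA.mono Finset.subset_union_left, by simpa using hv, rfl, ?_⟩
    simpa using h

/-- Seinsche's theorem: a `P₄`-free graph on at least two vertices is disconnected or has
disconnected complement. -/
lemma split_or_coSplit {V : Type*} [DecidableEq V] (G : SimpleGraph V)
    (hP : ∀ a b c d, ¬ IsP4 G a b c d) (M : Finset V) (hM : 2 ≤ M.card) :
    Split G M ∨ CoSplit G M := by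
  induction M using Finset.induction_on with
  | empty => simp at hM
  | insert v M hv ih =>
    by_cases h2 : 2 ≤ M.card
    · rcases ih h2 with h | h
      · exact split_insert G hP M h v hv
      · rw [← split_compl] at h
        have := split_insert Gᶜ (fun a b c d h => hP _ _ _ _ (isP4_compl h)) M h v hv
        rwa [split_compl, coSplit_compl, or_comm] at this
    · rw [Finset.card_insert_of_notMem hv] at hM
      obtain ⟨w, rfl⟩ := Finset.card_eq_one.1 (by omega : M.card = 1)
      have hvw : v ≠ w := by simpa using hv
      by_cases h : G.Adj v w
      · exact .inr ⟨{v}, {w}, by simp, by simp, by simpa using hvw, rfl, by simpa using h⟩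
      · exact .inl ⟨{v}, {w}, by simp, by simp, by simpa using hvw, rfl, by simpa using h⟩

lemma lapInt_resG_of_p4Free {V : Type*} [Fintype V] [DecidableEq V] (G : SimpleGraph V)
    (hP : ∀ a b c d, ¬ IsP4 G a b c d) (M : Finset V) : LapInt (resG G M) := by
  classical
  induction M using Finset.strongInduction with
  | H M ih =>
    intro μ f hf h
    by_cases hμ : μ = 0
    · exact ⟨0, by simp [hμ]⟩
    have hz := eq_zero_of_notMem hμ h
    obtain ⟨v, hv⟩ : ∃ v, f v ≠ 0 := Function.ne_iff.1 hf
    have hvM : v ∈ M := by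
      by_contra hvM
      exact hv (hz v hvM)
    by_cases h2 : 2 ≤ M.card
    · have hsub : ∀ A B : Finset V, A.Nonempty → B.Nonempty → Disjoint A B → A ∪ B = M →
          LapInt (resG G A) ∧ LapInt (resG G B) := by
        rintro A B ⟨a, ha⟩ ⟨b, hb⟩ hd rfl
        have hd' := Finset.disjoint_left.1 hd
        refine ⟨ih A ?_, ih B ?_⟩
        · exact Finset.ssubset_iff_subset_ne.2 ⟨Finset.subset_union_left, by grind⟩
        · exact Finset.ssubset_iff_subset_ne.2 ⟨Finset.subset_union_right, by grind⟩
      rcases split_or_coSplit G hP M h2 with ⟨A, B, hA, hB, hd, hAB, hno⟩ |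
        ⟨A, B, hA, hB, hd, hAB, hall⟩
      · obtain ⟨iA, iB⟩ := hsub A B hA hB hd hAB
        subst hAB
        rcases Finset.mem_union.1 hvM with hvM | hvM
        · exact int_of_disjoint_aux G A B hno iA μ f h v hvM hv
        · rw [Finset.union_comm] at h
          exact int_of_disjoint_aux G B A (fun b hb a ha h => hno a ha b hb h.symm) iB μ f h
            v hvM hv
      · obtain ⟨iA, iB⟩ := hsub A B hA hB hd hAB
        subst hAB
        rcases Finset.mem_union.1 hvM with hvM | hvM
        · exact int_of_join_aux G A B hd hall iA μ hμ f h v hvM hv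
        · rw [Finset.union_comm] at h
          exact int_of_join_aux G B A hd.symm (fun b hb a ha => (hall a ha b hb).symm) iB μ hμ f h
            v hvM hv
    · obtain ⟨w, rfl⟩ := Finset.card_eq_one.1
        (by have := Finset.card_pos.2 ⟨v, hvM⟩; omega : M.card = 1)
      have := h v
      rw [lap_resG_of_mem _ _ _ _ hvM] at this
      obtain rfl : v = w := by simpa using hvM
      simp [hv, hμ] at this

lemma lapInt_of_p4Free {V : Type*} [Fintype V] (G : SimpleGraph V)
    (hP : ∀ a b c d, ¬ IsP4 G a b c d) : LapInt G := by
  classical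
  have h := lapInt_resG_of_p4Free G hP Finset.univ
  have : resG G Finset.univ = G := by
    ext v w
    simp [resG]
  rwa [this] at h

/-! ### Induced paths and extension vertices -/

lemma IsP4.symm {V : Type*} {G : SimpleGraph V} {a b c d : V} (h : IsP4 G a b c d) :
    IsP4 G d c b a := by
  have := G.adj_comm
  unfold IsP4 at *
  grind

lemma IsP4.ne {V : Type*} {G : SimpleGraph V} {a b c d : V} (h : IsP4 G a b c d) :
    a ≠ b ∧ a ≠ c ∧ a ≠ d ∧ b ≠ c ∧ b ≠ d ∧ c ≠ d := by
  have := G.adj_comm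
  have := G.loopless.irrefl
  unfold IsP4 at *
  grind

lemma inducesP4_of_isP4 {V : Type*} [DecidableEq V] {G : SimpleGraph V} {a b c d : V}
    (h : IsP4 G a b c d) : InducesP4 G {a, b, c, d} := by
  obtain ⟨n1, n2, n3, n4, n5, n6⟩ := h.ne
  obtain ⟨h1, h2, h3, h4, h5, h6⟩ := h
  have hm : ∀ i : Fin 4, ![a, b, c, d] i ∈ ((({a, b, c, d} : Finset V)) : Set V) := by
    intro i
    fin_cases i <;> simp
  refine ⟨(RelIso.mk (Equiv.ofBijective (fun i : Fin 4 => ⟨![a, b, c, d] i, hm i⟩) ⟨?_, ?_⟩)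
    ?_ : SimpleGraph.pathGraph 4 ≃g _).symm⟩
  · intro i j hij
    fin_cases i <;> fin_cases j <;> simp_all
  · rintro ⟨y, hy⟩
    simp only [Finset.coe_insert, Finset.coe_singleton, Set.mem_insert_iff,
      Set.mem_singleton_iff] at hy
    rcases hy with rfl | rfl | rfl | rfl
    · exact ⟨0, rfl⟩
    · exact ⟨1, rfl⟩
    · exact ⟨2, rfl⟩
    · exact ⟨3, rfl⟩
  · intro i j
    change G.Adj (![a, b, c, d] i) (![a, b, c, d] j) ↔ _
    fin_cases i <;> fin_cases j <;>
      simp [SimpleGraph.pathGraph_adj, h1, h2, h3, h4, h5, h6, h1.symm, h2.symm, h3.symm,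
        G.adj_comm c a, G.adj_comm d a, G.adj_comm d b]

lemma exists_isP4_of_iso {V : Type*} {G : SimpleGraph V} {s : Set V}
    (e : G.induce s ≃g SimpleGraph.pathGraph 4) : ∃ a b c d, IsP4 G a b c d := by
  have key : ∀ i j, G.Adj (e.symm i) (e.symm j) ↔ (SimpleGraph.pathGraph 4).Adj i j :=
    fun i j => e.symm.map_rel_iff
  refine ⟨e.symm 0, e.symm 1, e.symm 2, e.symm 3, ?_⟩
  simp [IsP4, key, SimpleGraph.pathGraph_adj]

lemma isCograph_iff {V : Type*} (G : SimpleGraph V) :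
    IsCograph G ↔ ∀ a b c d, ¬ IsP4 G a b c d := by
  classical
  constructor
  · exact fun h a b c d hP => h _ (inducesP4_of_isP4 hP)
  · rintro h s ⟨e⟩
    obtain ⟨a, b, c, d, hP⟩ := exists_isP4_of_iso e
    exact h a b c d hP

/-- The neighbours of `y` on the induced path `a b c d` are none, all, or the two midpoints.
These are the adjacency patterns for which `y` lies in no induced `P₄` with three vertices of
the path. -/
def NonExt {V : Type*} (G : SimpleGraph V) (a b c d y : V) : Prop :=
  (G.Adj y a ↔ G.Adj y d) ∧ (G.Adj y b ↔ G.Adj y c) ∧ (G.Adj y a → G.Adj y b)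

/-- Every induced `P₄` has at most one extension vertex, in terms of `NonExt`. -/
def UniqueExt {V : Type*} (G : SimpleGraph V) : Prop :=
  ∀ a b c d x y, IsP4 G a b c d → (x ≠ a ∧ x ≠ b ∧ x ≠ c ∧ x ≠ d) →
    (y ≠ a ∧ y ≠ b ∧ y ≠ c ∧ y ≠ d) → ¬ NonExt G a b c d x → ¬ NonExt G a b c d y → x = y

lemma exists_inducesP4_of_not_nonExt {V : Type*} [DecidableEq V] {G : SimpleGraph V}
    {a b c d x : V} (h : IsP4 G a b c d) (hx : ¬ NonExt G a b c d x) :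
    ∃ T : Finset V, T ⊆ {a, b, c, d} ∧ T.card = 3 ∧ InducesP4 G (insert x T) := by
  obtain ⟨n1, n2, n3, n4, n5, n6⟩ := h.ne
  have hor : IsP4 G x a b c ∨ IsP4 G x d c b ∨ IsP4 G x b c d ∨ IsP4 G x c b a ∨
      IsP4 G a x c d ∨ IsP4 G d x b a ∨ IsP4 G b a x d ∨ IsP4 G a x d c ∨ IsP4 G d x a b := by
    have := G.adj_comm
    unfold IsP4 NonExt at *
    grind
  have mk : ∀ p q r s t u v : V, IsP4 G p q r s → ({t, u, v} : Finset V) ⊆ {a, b, c, d} →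
      t ≠ u → t ≠ v → u ≠ v → ({p, q, r, s} : Finset V) = insert x {t, u, v} →
      ∃ T : Finset V, T ⊆ {a, b, c, d} ∧ T.card = 3 ∧ InducesP4 G (insert x T) := by
    intro p q r s t u v hP hT h1 h2 h3 he
    refine ⟨{t, u, v}, hT, Finset.card_eq_three.2 ⟨t, u, v, h1, h2, h3, rfl⟩, ?_⟩
    rw [← he]
    exact inducesP4_of_isP4 hP
  rcases hor with hP | hP | hP | hP | hP | hP | hP | hP | hP
  · exact mk _ _ _ _ a b c hP (by grind) n1 n2 n4 (by grind)
  · exact mk _ _ _ _ b c d hP (by grind) n4 n5 n6 (by grind)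
  · exact mk _ _ _ _ b c d hP (by grind) n4 n5 n6 (by grind)
  · exact mk _ _ _ _ a b c hP (by grind) n1 n2 n4 (by grind)
  · exact mk _ _ _ _ a c d hP (by grind) n2 n3 n6 (by grind)
  · exact mk _ _ _ _ a b d hP (by grind) n1 n3 n5 (by grind)
  · exact mk _ _ _ _ a b d hP (by grind) n1 n3 n5 (by grind)
  · exact mk _ _ _ _ a c d hP (by grind) n2 n3 n6 (by grind)
  · exact mk _ _ _ _ a b d hP (by grind) n1 n3 n5 (by grind)

lemma uniqueExt_of_p4Extendible {V : Type*} [DecidableEq V] {G : SimpleGraph V}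
    (hG : P4Extendible G) : UniqueExt G := by
  intro a b c d x y hP hx hy hxE hyE
  refine hG {a, b, c, d} (inducesP4_of_isP4 hP) ⟨by simpa using hx, ?_⟩ ⟨by simpa using hy, ?_⟩
  · exact exists_inducesP4_of_not_nonExt hP hxE
  · exact exists_inducesP4_of_not_nonExt hP hyE

/-! ### Induced paths destroy `L`-integrality -/

lemma not_lapInt_of_no_ext {V : Type*} [Fintype V] {G : SimpleGraph V} {a b c d : V}
    (h : IsP4 G a b c d)
    (hE : ∀ y, y ≠ a → y ≠ b → y ≠ c → y ≠ d → NonExt G a b c d y) : ¬ LapInt G := by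
  classical
  obtain ⟨n1, n2, n3, n4, n5, n6⟩ := h.ne
  obtain ⟨h1, h2, h3, h4, h5, h6⟩ := h
  refine not_lapInt_of_antisymm G a d b c h1 h3.symm h4 (fun h => h6 h.symm) n3 n4 n2 n5.symm
    (fun y y1 y2 y3 y4 => ⟨(hE y y1 y3 y4 y2).1, (hE y y1 y3 y4 y2).2.1⟩) ?_
  have := dg_sub_le G {a, b, c, d} a b (by
    intro y hy
    simp only [Finset.mem_insert, Finset.mem_singleton, not_or] at hy
    simpa [G.adj_comm] using (hE y hy.1 hy.2.1 hy.2.2.1 hy.2.2.2).2.2)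
  rw [Finset.sum_insert (by simp; tauto), Finset.sum_insert (by simp; tauto),
    Finset.sum_insert (by simp; tauto), Finset.sum_singleton] at this
  simp only [h1, h1.symm, h2, h4, h5, h6, G.loopless.irrefl, if_true, if_false] at this ⊢
  intro e
  linarith

/-- Extension to an induced path on five vertices `x a b c d`. -/
lemma not_lapInt_of_p5 {V : Type*} [Fintype V] {G : SimpleGraph V} (hU : UniqueExt G)
    {a b c d x : V} (h : IsP4 G a b c d) (hx : x ≠ a ∧ x ≠ b ∧ x ≠ c ∧ x ≠ d)
    (xa : G.Adj x a) (xb : ¬ G.Adj x b) (xc : ¬ G.Adj x c) (xd : ¬ G.Adj x d) :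
    ¬ LapInt G := by
  classical
  have hsym := G.adj_comm
  obtain ⟨n1, n2, n3, n4, n5, n6⟩ := h.ne
  have hP2 : IsP4 G x a b c := by unfold IsP4 at *; grind
  have hout : ∀ y, y ≠ a → y ≠ b → y ≠ c → y ≠ d → y ≠ x →
      (G.Adj y x ↔ G.Adj y a) ∧ (G.Adj y b ↔ G.Adj y a) ∧ (G.Adj y c ↔ G.Adj y a) ∧
      (G.Adj y d ↔ G.Adj y a) := by
    intro y y1 y2 y3 y4 y5
    have u1 := hU a b c d x y h
    have u2 := hU x a b c d y hP2
    unfold IsP4 NonExt at *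
    grind
  obtain ⟨h1, h2, h3, h4, h5, h6⟩ := h
  refine not_lapInt_of_antisymm G x d a c xa h3.symm xc (by grind) (by grind) (by grind) (by grind)
    (by grind) (by grind) ?_
  have := dg_sub_eq G {a, b, c, d, x} x a (by
    intro y hy
    simp only [Finset.mem_insert, Finset.mem_singleton, not_or] at hy
    have := hout y
    grind)
  rw [Finset.sum_insert (by simp; grind), Finset.sum_insert (by simp; grind),
    Finset.sum_insert (by simp; grind), Finset.sum_insert (by simp; grind),
    Finset.sum_singleton] at this
  simp only [h1, xa, xa.symm, xb, xc, xd, h4, h5, G.loopless.irrefl, if_true, if_false] at this ⊢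
  intro e
  linarith

/-- Extension to an induced cycle on five vertices. -/
lemma not_lapInt_of_c5 {V : Type*} [Fintype V] {G : SimpleGraph V} (hU : UniqueExt G)
    {a b c d x : V} (h : IsP4 G a b c d) (hx : x ≠ a ∧ x ≠ b ∧ x ≠ c ∧ x ≠ d)
    (xa : G.Adj x a) (xb : ¬ G.Adj x b) (xc : ¬ G.Adj x c) (xd : G.Adj x d) :
    ¬ LapInt G := by
  classical
  have hsym := G.adj_comm
  obtain ⟨n1, n2, n3, n4, n5, n6⟩ := h.ne
  have hP2 : IsP4 G b a x d := by unfold IsP4 at *; grind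
  have hout : ∀ y, y ≠ a → y ≠ b → y ≠ c → y ≠ d → y ≠ x →
      (G.Adj y x ↔ G.Adj y a) ∧ (G.Adj y b ↔ G.Adj y a) ∧ (G.Adj y c ↔ G.Adj y a) ∧
      (G.Adj y d ↔ G.Adj y a) := by
    intro y y1 y2 y3 y4 y5
    have u1 := hU a b c d x y h
    have u2 := hU b a x d c y hP2
    unfold IsP4 NonExt at *
    grind
  obtain ⟨h1, h2, h3, h4, h5, h6⟩ := h
  refine not_lapInt_of_antisymm G a c x d xa.symm h3 h5 (by grind) (by grind) (by grind) (by grind)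
    (by grind) (by grind) ?_
  have := dg_sub_eq G {a, b, c, d, x} a x (by
    intro y hy
    simp only [Finset.mem_insert, Finset.mem_singleton, not_or] at hy
    have := hout y
    grind)
  rw [Finset.sum_insert (by simp; grind), Finset.sum_insert (by simp; grind),
    Finset.sum_insert (by simp; grind), Finset.sum_insert (by simp; grind),
    Finset.sum_singleton] at this
  simp only [h1, xa, xa.symm, xb, xc, xd, h4, h5, G.loopless.irrefl, if_true, if_false] at this ⊢
  intro e
  linarith

/-- Extension to a house, the complement of a path on five vertices. -/
lemma not_lapInt_of_house {V : Type*} [Fintype V] {G : SimpleGraph V} (hU : UniqueExt G)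
    {a b c d x : V} (h : IsP4 G a b c d) (hx : x ≠ a ∧ x ≠ b ∧ x ≠ c ∧ x ≠ d)
    (xa : G.Adj x a) (xb : G.Adj x b) (xc : ¬ G.Adj x c) (xd : G.Adj x d) :
    ¬ LapInt G := by
  classical
  have hsym := G.adj_comm
  obtain ⟨n1, n2, n3, n4, n5, n6⟩ := h.ne
  have hP2 : IsP4 G a x d c := by unfold IsP4 at *; grind
  have hout : ∀ y, y ≠ a → y ≠ b → y ≠ c → y ≠ d → y ≠ x →
      (G.Adj y x ↔ G.Adj y a) ∧ (G.Adj y b ↔ G.Adj y a) ∧ (G.Adj y c ↔ G.Adj y a) ∧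
      (G.Adj y d ↔ G.Adj y a) := by
    intro y y1 y2 y3 y4 y5
    have u1 := hU a b c d x y h
    have u2 := hU a x d c b y hP2
    unfold IsP4 NonExt at *
    grind
  obtain ⟨h1, h2, h3, h4, h5, h6⟩ := h
  refine not_lapInt_of_antisymm G x b d c xd h2 xc h6 (by grind) (by grind) (by grind)
    (by grind) (by grind) ?_
  have := dg_sub_eq G {a, b, c, d, x} d x (by
    intro y hy
    simp only [Finset.mem_insert, Finset.mem_singleton, not_or] at hy
    have := hout y
    grind)
  rw [Finset.sum_insert (by simp; grind), Finset.sum_insert (by simp; grind),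
    Finset.sum_insert (by simp; grind), Finset.sum_insert (by simp; grind),
    Finset.sum_singleton] at this
  simp only [h3.symm, xa, xd.symm, xb, xc, xd, G.adj_comm d a, h5, G.adj_comm d b, h6,
    G.loopless.irrefl, if_true, if_false] at this ⊢
  intro e
  linarith

/-- The extension vertex `x` is a twin of `a` or of `b`. Let `R` be the set of vertices outside
the extended path that see exactly its midpoints. Either some induced `P₄` has no extension, or
the extended path together with `R` is a module, in which `d` is a pendant vertex. -/
lemma not_lapInt_of_twin {V : Type*} [Fintype V] {G : SimpleGraph V} (hU : UniqueExt G)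
    {a b c d x : V} (h : IsP4 G a b c d) (hx : x ≠ a ∧ x ≠ b ∧ x ≠ c ∧ x ≠ d)
    (xd : ¬ G.Adj x d) (htw : (G.Adj x b ∧ ¬ G.Adj x c) ∨ (G.Adj x a ∧ G.Adj x c)) :
    ¬ LapInt G := by
  classical
  have hsym := G.adj_comm
  obtain ⟨n1, n2, n3, n4, n5, n6⟩ := h.ne
  have hne : ∀ y, y ≠ a → y ≠ b → y ≠ c → y ≠ d → y ≠ x → NonExt G a b c d y := by
    intro y y1 y2 y3 y4 y5
    have u1 := hU a b c d x y h
    unfold IsP4 NonExt at *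
    grind
  have htwin : ∀ y, y ≠ a → y ≠ b → y ≠ c → y ≠ d → y ≠ x →
      (G.Adj x b → ¬ G.Adj x c → (G.Adj y x ↔ G.Adj y a)) ∧
      (G.Adj x a → G.Adj x c → (G.Adj y x ↔ G.Adj y b)) := by
    intro y y1 y2 y3 y4 y5
    have u0 := hne y y1 y2 y3 y4 y5
    have u1 := hU x b c d a y
    have u2 := hU a x c d b y
    unfold IsP4 NonExt at *
    grind
  -- `n` sees nothing of the path, `r` sees the midpoints. If they are adjacent, `n r c d` has no
  -- extension: `x` is the only one of `n r b a`, and both paths look alike from elsewhere.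
  by_cases c1 : ∃ n r, (n ≠ a ∧ n ≠ b ∧ n ≠ c ∧ n ≠ d ∧ n ≠ x) ∧
      (r ≠ a ∧ r ≠ b ∧ r ≠ c ∧ r ≠ d ∧ r ≠ x) ∧ ¬ G.Adj n b ∧ G.Adj r b ∧ ¬ G.Adj r a ∧ G.Adj n r
  · obtain ⟨n, r, hn, hr, nb, rb, ra, nr⟩ := c1
    have tn := htwin n hn.1 hn.2.1 hn.2.2.1 hn.2.2.2.1 hn.2.2.2.2
    have tr := htwin r hr.1 hr.2.1 hr.2.2.1 hr.2.2.2.1 hr.2.2.2.2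
    have en := hne n hn.1 hn.2.1 hn.2.2.1 hn.2.2.2.1 hn.2.2.2.2
    have er := hne r hr.1 hr.2.1 hr.2.2.1 hr.2.2.2.1 hr.2.2.2.2
    have hP : IsP4 G n r b a := by unfold IsP4 NonExt at *; grind
    have hQ : IsP4 G n r c d := by unfold IsP4 NonExt at *; grind
    have hxE : ¬ NonExt G n r b a x := by
      unfold IsP4 NonExt at *
      grind
    refine not_lapInt_of_no_ext hQ fun y y1 y2 y3 y4 => ?_
    by_cases hya : y = a
    · subst hya; unfold IsP4 NonExt at *; grind
    by_cases hyb : y = b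
    · subst hyb; unfold IsP4 NonExt at *; grind
    by_cases hyx : y = x
    · subst hyx; unfold IsP4 NonExt at *; grind
    have ey := hne y hya hyb y3 y4 hyx
    have u := hU n r b a x y hP
    unfold NonExt at ey ⊢ u
    unfold NonExt at hxE
    grind
  -- `s` sees the whole path, `r` the midpoints. This is the previous case in the complement, so the
  -- path without extension is `d s b r` for a twin of `a`, and `a s c r` for a twin of `b`.
  by_cases c2 : ∃ s r, (s ≠ a ∧ s ≠ b ∧ s ≠ c ∧ s ≠ d ∧ s ≠ x) ∧
      (r ≠ a ∧ r ≠ b ∧ r ≠ c ∧ r ≠ d ∧ r ≠ x) ∧ G.Adj s a ∧ G.Adj r b ∧ ¬ G.Adj r a ∧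
      s ≠ r ∧ ¬ G.Adj s r
  · obtain ⟨s, r, hs, hr, sa, rb, ra, hsr, sr⟩ := c2
    have ts := htwin s hs.1 hs.2.1 hs.2.2.1 hs.2.2.2.1 hs.2.2.2.2
    have tr := htwin r hr.1 hr.2.1 hr.2.2.1 hr.2.2.2.1 hr.2.2.2.2
    have es := hne s hs.1 hs.2.1 hs.2.2.1 hs.2.2.2.1 hs.2.2.2.2
    have er := hne r hr.1 hr.2.1 hr.2.2.1 hr.2.2.2.1 hr.2.2.2.2
    have hP : IsP4 G a s c r := by unfold IsP4 NonExt at *; grind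
    have hQ : IsP4 G d s b r := by unfold IsP4 NonExt at *; grind
    rcases htw with htw | htw
    · have hxE : ¬ NonExt G a s c r x := by
        unfold IsP4 NonExt at *
        grind
      refine not_lapInt_of_no_ext hQ fun y y1 y2 y3 y4 => ?_
      by_cases hya : y = a
      · subst hya; unfold IsP4 NonExt at *; grind
      by_cases hyc : y = c
      · subst hyc; unfold IsP4 NonExt at *; grind
      by_cases hyx : y = x
      · subst hyx; unfold IsP4 NonExt at *; grind
      have ey := hne y hya y3 hyc y1 hyx
      have u := hU a s c r x y hP
      unfold NonExt at ey ⊢ u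
      unfold NonExt at hxE
      grind
    · have hxE : ¬ NonExt G d s b r x := by
        unfold IsP4 NonExt at *
        grind
      refine not_lapInt_of_no_ext hP fun y y1 y2 y3 y4 => ?_
      by_cases hyb : y = b
      · subst hyb; unfold IsP4 NonExt at *; grind
      by_cases hyd : y = d
      · subst hyd; unfold IsP4 NonExt at *; grind
      by_cases hyx : y = x
      · subst hyx; unfold IsP4 NonExt at *; grind
      have ey := hne y y1 hyb y3 hyd hyx
      have u := hU d s b r x y hQ
      unfold NonExt at ey ⊢ u
      unfold NonExt at hxE
      grind
  -- Now the extended path and `R` form a module `M`.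
  push Not at c1 c2
  set M : Finset V := {a, b, c, d, x} ∪ Finset.univ.filter (fun y => G.Adj y b ∧ ¬ G.Adj y a)
    with hM
  have mem : ∀ y, y ∈ M ↔ (y = a ∨ y = b ∨ y = c ∨ y = d ∨ y = x) ∨
      (G.Adj y b ∧ ¬ G.Adj y a) := by
    intro y
    simp [hM, or_assoc]
  intro hL
  refine not_lapInt_of_pendant (resG G M) a b c d (fun y => ?_) ?_ n2 ?_ ?_
    (lapInt_resG_of_module G M (fun y hy => ?_) hL)
  · obtain ⟨h1, h2, h3, h4, h5, h6⟩ := h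
    constructor
    · rintro ⟨-, hyM, hdy⟩
      rw [mem] at hyM
      by_contra hyc
      have y1 : y ≠ a := by rintro rfl; exact h5 hdy.symm
      have y2 : y ≠ b := by rintro rfl; exact h6 hdy.symm
      have y4 : y ≠ d := hdy.ne'
      have y5 : y ≠ x := by rintro rfl; exact xd hdy.symm
      have hya : ¬ G.Adj y a := by tauto
      exact hya ((hne y y1 y2 hyc y4 y5).1.2 hdy.symm)
    · rintro rfl
      exact ⟨(mem d).2 (by simp), (mem y).2 (by simp), h3.symm⟩
  · exact fun hac => h.2.2.2.1 hac.2.2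
  · exact ⟨(mem a).2 (by simp), (mem b).2 (by simp), h.1⟩
  · exact ⟨(mem b).2 (by simp), (mem c).2 (by simp), h.2.1⟩
  · simp only [mem, not_or] at hy
    obtain ⟨⟨y1, y2, y3, y4, y5⟩, hy6⟩ := hy
    have ey := hne y y1 y2 y3 y4 y5
    have ty := htwin y y1 y2 y3 y4 y5
    by_cases hya : G.Adj y a
    · have hyb := ey.2.2 hya
      have hyx : G.Adj y x := by tauto
      left
      intro z hz
      by_cases hzH : z = a ∨ z = b ∨ z = c ∨ z = d ∨ z = x
      · rcases hzH with rfl | rfl | rfl | rfl | rfl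
        exacts [hya, hyb, ey.2.1.1 hyb, ey.1.1 hya, hyx]
      · have hz2 := ((mem z).1 hz).resolve_left hzH
        simp only [not_or] at hzH
        refine c2 y z ⟨y1, y2, y3, y4, y5⟩ hzH hya hz2.1 hz2.2 ?_
        rintro rfl
        exact hz2.2 hya
    · have hyb : ¬ G.Adj y b := fun hyb => hy6 ⟨hyb, hya⟩
      have hyx : ¬ G.Adj y x := by tauto
      right
      intro z hz
      by_cases hzH : z = a ∨ z = b ∨ z = c ∨ z = d ∨ z = x
      · rcases hzH with rfl | rfl | rfl | rfl | rfl
        exacts [hya, hyb, fun h => hyb (ey.2.1.2 h), fun h => hya (ey.1.2 h), hyx]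
      · have hz2 := ((mem z).1 hz).resolve_left hzH
        simp only [not_or] at hzH
        exact c1 y z ⟨y1, y2, y3, y4, y5⟩ hzH hyb hz2.1 hz2.2

lemma not_lapInt_of_isP4 {V : Type*} [Fintype V] {G : SimpleGraph V} (hU : UniqueExt G)
    {a b c d : V} (h : IsP4 G a b c d) : ¬ LapInt G := by
  by_cases hE : ∃ x, (x ≠ a ∧ x ≠ b ∧ x ≠ c ∧ x ≠ d) ∧ ¬ NonExt G a b c d x
  · obtain ⟨x, hx, hxE⟩ := hE
    have hx' : x ≠ d ∧ x ≠ c ∧ x ≠ b ∧ x ≠ a := ⟨hx.2.2.2, hx.2.2.1, hx.2.1, hx.1⟩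
    have p1 := not_lapInt_of_p5 hU h hx
    have p2 := not_lapInt_of_p5 hU h.symm hx'
    have p3 := not_lapInt_of_c5 hU h hx
    have p4 := not_lapInt_of_house hU h hx
    have p5 := not_lapInt_of_house hU h.symm hx'
    have p6 := not_lapInt_of_twin hU h hx
    have p7 := not_lapInt_of_twin hU h.symm hx'
    unfold NonExt at hxE
    by_cases xa : G.Adj x a <;> by_cases xb : G.Adj x b <;> by_cases xc : G.Adj x c <;>
      by_cases xd : G.Adj x d <;> simp_all
  · push Not at hE
    exact not_lapInt_of_no_ext h fun y y1 y2 y3 y4 => hE y ⟨y1, y2, y3, y4⟩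

/-- A `P₄`-extendible graph is `L`-integral if and only if it is a cograph. -/
theorem P4Extendible_LIntegral_iff_isCograph {V : Type*} [Fintype V] [DecidableEq V]
    (G : SimpleGraph V) [DecidableRel G.Adj] (hG : P4Extendible G) :
    LIntegral G ↔ IsCograph G := by
  rw [lIntegral_iff_lapInt, isCograph_iff]
  exact ⟨fun h a b c d hP => not_lapInt_of_isP4 (uniqueExt_of_p4Extendible hG) hP h,
    lapInt_of_p4Free G⟩
end
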